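/- arXiv:2308.01506 — 4 statements merged into one kernel-verified Lean document; each statement's English description precedes it below -/
import Mathlib

section
/- Let d ≥ 2 and r ∈ [1,∞]. There is a constant C = C(d,r) such that for all a, f ∈ C^∞(𝕋^d), the bilinear anti-divergence operator satisfies ‖𝓑(a,f)‖_{L^r(𝕋^d)} ≤ C ‖a‖_{C^1} ‖ℛf‖_{L^r(𝕋^d)}. -/
open MeasureTheory ENNReal

noncomputable section

/-- Points of `ℝ^d` (representing the torus `𝕋^d = ℝ^d/ℤ^d` via periodic functions). -/
abbrev Vec (d : ℕ) := Fin d → ℝ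

/-- One fundamental domain `[0,1]^d` of the torus. -/
def fundCube (d : ℕ) : Set (Vec d) := Set.Icc 0 1

/-- `ℤ^d`-periodicity of a function on `ℝ^d`. -/
def ZPer {d : ℕ} {α : Type*} (f : Vec d → α) : Prop :=
  ∀ (x : Vec d) (k : Fin d → ℤ), f (x + fun i => (k i : ℝ)) = f x

/-- Generic `L^p` "norm" (`p ∈ [1,∞]` as `ℝ≥0∞`) of an `ℝ≥0∞`-valued function. -/
def eLpGen {α : Type*} [MeasurableSpace α] (μ : Measure α) (p : ℝ≥0∞)
    (g : α → ℝ≥0∞) : ℝ≥0∞ :=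
  if p = ∞ then essSup g μ
  else (∫⁻ a, g a ^ p.toReal ∂μ) ^ (1 / p.toReal)

/-- Spatial `L^p` norm over one fundamental domain of the torus. -/
def spLp {d : ℕ} {E : Type*} [NormedAddCommGroup E] (p : ℝ≥0∞)
    (f : Vec d → E) : ℝ≥0∞ :=
  eLpGen (volume.restrict (fundCube d)) p (fun x => (‖f x‖₊ : ℝ≥0∞))

/-- `W^{1,q}` norm of a vector field on the torus: `‖u‖_{L^q} + ‖∇u‖_{L^q}`. -/
def W1qNorm {d : ℕ} (q : ℝ≥0∞) (u : Vec d → Vec d) : ℝ≥0∞ :=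
  spLp q u + spLp q (fderiv ℝ u)

/-- `L^s(0,T;L^p(𝕋^d))` norm. -/
def LsLpT {d : ℕ} {E : Type*} [NormedAddCommGroup E] (T : ℝ) (s p : ℝ≥0∞)
    (f : ℝ → Vec d → E) : ℝ≥0∞ :=
  eLpGen (volume.restrict (Set.Ioo 0 T)) s (fun t => spLp p (f t))

/-- `L^s(0,T;W^{1,q}(𝕋^d))` norm. -/
def LsW1qT {d : ℕ} (T : ℝ) (s q : ℝ≥0∞) (u : ℝ → Vec d → Vec d) : ℝ≥0∞ :=
  eLpGen (volume.restrict (Set.Ioo 0 T)) s (fun t => W1qNorm q (u t))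

/-- Gradient of a scalar function on `ℝ^d`. -/
def gradV {d : ℕ} (f : Vec d → ℝ) (x : Vec d) : Vec d :=
  fun i => fderiv ℝ f x (Pi.single i 1)

/-- Divergence of a vector field on `ℝ^d`. -/
def divV {d : ℕ} (v : Vec d → Vec d) (x : Vec d) : ℝ :=
  ∑ i, fderiv ℝ (fun y => v y i) x (Pi.single i 1)

/-- Laplacian of a scalar function on `ℝ^d`. -/
def laplV {d : ℕ} (f : Vec d → ℝ) : Vec d → ℝ := divV (gradV f)

/-- Euclidean dot product on `ℝ^d`. -/
def dotV {d : ℕ} (a b : Vec d) : ℝ := ∑ i, a i * b i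

/-- `C^N` norm over one fundamental domain. -/
def CkN {d : ℕ} (N : ℕ) (φ : Vec d → ℝ) : ℝ :=
  ∑ i ∈ Finset.range (N + 1), sSup ((fun x => ‖iteratedFDeriv ℝ i φ x‖) '' fundCube d)

/-- `W^{m,r}` norm over one fundamental domain. -/
def SobN {d : ℕ} {E : Type*} [NormedAddCommGroup E] [NormedSpace ℝ E]
    (m : ℕ) (r : ℝ≥0∞) (f : Vec d → E) : ℝ≥0∞ :=
  ∑ i ∈ Finset.range (m + 1), spLp r (iteratedFDeriv ℝ i f)

/-- Test functions for the weak formulation on `[0,T) × 𝕋^d`: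
smooth, `ℤ^d`-periodic in space, vanishing for `t` near `T` (compact support in `[0,T)`). -/
def IsTest (d : ℕ) (T : ℝ) (φ : ℝ → Vec d → ℝ) : Prop :=
  ContDiff ℝ (⊤ : ℕ∞) (Function.uncurry φ) ∧ (∀ t, ZPer (φ t)) ∧
    ∃ T', T' < T ∧ ∀ t, T' ≤ t → ∀ x, φ t x = 0

/-- `ρ` is a weak solution on `(0,T) × 𝕋^d` of `∂_t ρ + u·∇ρ = 0` with initial data `ρ₀`. -/
def IsWeakSolution (d : ℕ) (T : ℝ) (u : ℝ → Vec d → Vec d)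
    (ρ : ℝ → Vec d → ℝ) (ρ₀ : Vec d → ℝ) : Prop :=
  ∀ φ : ℝ → Vec d → ℝ, IsTest d T φ →
    ∫ x in fundCube d, ρ₀ x * φ 0 x =
      ∫ t in Set.Ioo 0 T, ∫ x in fundCube d,
        ρ t x * (deriv (fun τ => φ τ x) t + fderiv ℝ (φ t) x (u t x))

/-- `u` is divergence free in the sense of distributions on `(0,T) × 𝕋^d`. -/
def WeaklyDivFree (d : ℕ) (T : ℝ) (u : ℝ → Vec d → Vec d) : Prop :=
  ∀ φ : ℝ → Vec d → ℝ, ContDiff ℝ (⊤ : ℕ∞) (Function.uncurry φ) →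
    (∀ t, ZPer (φ t)) →
    ∫ t in Set.Ioo 0 T, ∫ x in fundCube d, fderiv ℝ (φ t) x (u t x) = 0

end

namespace BAD

open scoped Pointwise

noncomputable abbrev muQ (d : ℕ) : Measure (Vec d) := volume.restrict (fundCube d)

lemma muQ_univ (d : ℕ) : muQ d Set.univ = 1 := by
  simp [muQ, fundCube, Real.volume_Icc_pi]

instance (d : ℕ) : IsProbabilityMeasure (muQ d) := ⟨muQ_univ d⟩

lemma span_mem {d : ℕ} (g : Submodule.span ℤ (Set.range (Pi.basisFun ℝ (Fin d)))) :
    ∃ k : Fin d → ℤ, (g : Vec d) = fun i => (k i : ℝ) := by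
  obtain ⟨g, hg⟩ := g
  rw [Module.Basis.mem_span_iff_repr_mem] at hg
  choose k hk using hg
  exact ⟨k, by ext i; simpa using (hk i).symm⟩

abbrev FD (d : ℕ) : Set (Vec d) := ZSpan.fundamentalDomain (Pi.basisFun ℝ (Fin d))

lemma FD_ae (d : ℕ) : FD d =ᵐ[volume] fundCube d := by
  rw [FD, ZSpan.fundamentalDomain_pi_basisFun]
  exact Measure.univ_pi_Ico_ae_eq_Icc

lemma FD_trans {d : ℕ} (t : Vec d) : IsAddFundamentalDomain
    (Submodule.span ℤ (Set.range (Pi.basisFun ℝ (Fin d)))) (t +ᵥ FD d) volume := by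
  have h := ZSpan.isAddFundamentalDomain (Pi.basisFun ℝ (Fin d)) volume
  exact h.vadd_of_comm t

lemma inv_of {d : ℕ} {α : Type*} {h : Vec d → α} (hp : ZPer h)
    (g : Submodule.span ℤ (Set.range (Pi.basisFun ℝ (Fin d)))) (x : Vec d) :
    h (g +ᵥ x) = h x := by
  obtain ⟨k, hk⟩ := span_mem g
  have : g +ᵥ x = x + fun i => (k i : ℝ) := by
    rw [← hk, add_comm]; rfl
  rw [this, hp]

lemma vinv {d : ℕ} : VAddInvariantMeasure
    (Submodule.span ℤ (Set.range (Pi.basisFun ℝ (Fin d)))) (Vec d) volume :=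
  inferInstanceAs <| VAddInvariantMeasure
    (Submodule.span ℤ (Set.range (Pi.basisFun ℝ (Fin d)))).toAddSubgroup (Vec d) volume

lemma lint_trans {d : ℕ} (h : Vec d → ℝ≥0∞) (hp : ZPer h) (t : Vec d) :
    ∫⁻ x, h (x + t) ∂(muQ d) = ∫⁻ x, h x ∂(muQ d) := by
  have := vinv (d := d)
  have h1 := ZSpan.isAddFundamentalDomain (Pi.basisFun ℝ (Fin d)) volume
  rw [muQ, ← Measure.restrict_congr_set (FD_ae d)]
  rw [h1.setLIntegral_eq (FD_trans t) h (inv_of hp)]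
  have e := (measurePreserving_add_right (volume : Measure (Vec d)) t)
  have := e.setLIntegral_comp_emb (MeasurableEquiv.addRight t).measurableEmbedding h (FD d)
  rw [this]
  congr 2
  rw [← Set.image_vadd]
  exact Set.image_congr fun x _ => add_comm _ _

lemma int_trans {d : ℕ} (h : Vec d → ℝ) (hp : ZPer h) (t : Vec d) :
    ∫ x, h (x + t) ∂(muQ d) = ∫ x, h x ∂(muQ d) := by
  have := vinv (d := d)
  have h1 := ZSpan.isAddFundamentalDomain (Pi.basisFun ℝ (Fin d)) volume
  rw [muQ, ← Measure.restrict_congr_set (FD_ae d)]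
  rw [h1.setIntegral_eq (FD_trans t) (inv_of hp)]
  have e := (measurePreserving_add_right (volume : Measure (Vec d)) t)
  have := e.setIntegral_image_emb (MeasurableEquiv.addRight t).measurableEmbedding h (FD d)
  rw [← this]
  congr 2
  rw [← Set.image_vadd]
  exact Set.image_congr fun x _ => add_comm _ _

lemma spLp_eq {d : ℕ} {E : Type*} [NormedAddCommGroup E] (r : ℝ≥0∞) (hr : 1 ≤ r)
    (f : Vec d → E) : spLp r f = eLpNorm (fun x => ‖f x‖ₑ) r (muQ d) := by
  have h0 : r ≠ 0 := (lt_of_lt_of_le one_pos hr).ne'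
  rw [spLp, eLpGen]
  split_ifs with h
  · subst h; simp [eLpNorm_exponent_top, eLpNormEssSup]; rfl
  · rw [eLpNorm_eq_lintegral_rpow_enorm_toReal h0 h]; rfl

lemma mink {d : ℕ} (r : ℝ≥0∞) (hr : 1 ≤ r) {Z : Type*} [MeasurableSpace Z] (μ : Measure Z)
    [IsFiniteMeasure μ] (τ : Z → Vec d) (hτ : Measurable τ) (h : Vec d → ℝ≥0∞)
    (hm : Measurable h) (hp : ZPer h) :
    eLpNorm (fun x => ∫⁻ z, h (x + τ z) ∂μ) r (muQ d) ≤ μ Set.univ * eLpNorm h r (muQ d) := by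
  have h0 : r ≠ 0 := (lt_of_lt_of_le one_pos hr).ne'
  have hm2 : Measurable (fun q : Vec d × Z => h (q.1 + τ q.2)) := by fun_prop
  by_cases htop : r = ∞
  · subst htop
    set M := eLpNorm h ∞ (muQ d)
    have h1 : ∀ᵐ x ∂(muQ d), h x ≤ M := by
      have := enorm_ae_le_eLpNormEssSup h (muQ d)
      simpa [M] using this
    have h2 : ∀ t, ∀ᵐ x ∂(muQ d), h (x + t) ≤ M := by
      intro t
      have hs : MeasurableSet {x | M < h x} := measurableSet_lt measurable_const hm
      have hper : ZPer (Set.indicator {x | M < h x} (1 : Vec d → ℝ≥0∞)) := by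
        intro x k
        simp only [Set.indicator, Set.mem_ofPred_eq, hp x k]
        simp
      have e := lint_trans _ hper t
      have z : ∫⁻ x, Set.indicator {x | M < h x} (1 : Vec d → ℝ≥0∞) x ∂(muQ d) = 0 := by
        rw [lintegral_indicator_one hs]
        simpa [ae_iff] using h1
      rw [z, lintegral_eq_zero_iff (by
        exact (measurable_one.indicator hs).comp (measurable_add_const t))] at e
      filter_upwards [e] with x hx
      by_contra hc
      simp [not_le.mp hc] at hx
    have h3 : ∀ᵐ x ∂(muQ d), ∀ᵐ z ∂μ, h (x + τ z) ≤ M := by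
      rw [Measure.ae_ae_comm (p := fun x z => h (x + τ z) ≤ M) (measurableSet_le hm2 measurable_const)]
      exact Filter.Eventually.of_forall fun z => h2 (τ z)
    rw [eLpNorm_exponent_top]
    refine essSup_le_of_ae_le _ ?_
    filter_upwards [h3] with x hx
    calc _ = ∫⁻ z, h (x + τ z) ∂μ := rfl
      _ ≤ ∫⁻ z, M ∂μ := lintegral_mono_ae hx
      _ = _ := by simp [mul_comm]
  · have hrpos : 0 < r.toReal := ENNReal.toReal_pos h0 htop
    have hr1 : 1 ≤ r.toReal := by
      rw [← ENNReal.toReal_one]; exact ENNReal.toReal_mono htop hr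
    have key : ∀ x, (∫⁻ z, h (x + τ z) ∂μ) ^ r.toReal ≤
        (∫⁻ z, h (x + τ z) ^ r.toReal ∂μ) * μ Set.univ ^ (r.toReal - 1) := by
      intro x
      have hmx : Measurable (fun z => h (x + τ z)) := by fun_prop
      have := eLpNorm_le_eLpNorm_mul_rpow_measure_univ (μ := μ) (f := fun z => h (x + τ z)) hr
        hmx.aestronglyMeasurable
      rw [eLpNorm_one_eq_lintegral_enorm, eLpNorm_eq_lintegral_rpow_enorm_toReal h0 htop] at this
      simp only [enorm_eq_self, ENNReal.toReal_one] at this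
      calc _ ≤ _ := ENNReal.rpow_le_rpow this hrpos.le
        _ = _ := by
          rw [ENNReal.mul_rpow_of_nonneg _ _ hrpos.le, ← ENNReal.rpow_mul, ← ENNReal.rpow_mul]
          congr 2
          · rw [one_div, inv_mul_cancel₀ hrpos.ne', ENNReal.rpow_one]
          · field_simp
    rw [eLpNorm_eq_lintegral_rpow_enorm_toReal h0 htop,
      eLpNorm_eq_lintegral_rpow_enorm_toReal h0 htop]
    simp only [enorm_eq_self]
    have hper : ZPer (fun x => h x ^ r.toReal) := by
      intro x k; simp only [hp x k]
    have big : ∫⁻ x, (∫⁻ z, h (x + τ z) ∂μ) ^ r.toReal ∂(muQ d) ≤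
        μ Set.univ ^ r.toReal * ∫⁻ x, h x ^ r.toReal ∂(muQ d) := by
      calc _ ≤ ∫⁻ x, (∫⁻ z, h (x + τ z) ^ r.toReal ∂μ) * μ Set.univ ^ (r.toReal - 1) ∂(muQ d) :=
            lintegral_mono key
        _ = (∫⁻ x, (∫⁻ z, h (x + τ z) ^ r.toReal ∂μ) ∂(muQ d)) * μ Set.univ ^ (r.toReal - 1) := by
            rw [lintegral_mul_const]
            exact Measurable.lintegral_prod_right' (f := fun q : Vec d × Z =>
              h (q.1 + τ q.2) ^ r.toReal) (hm2.pow_const _)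
        _ = (∫⁻ z, (∫⁻ x, h (x + τ z) ^ r.toReal ∂(muQ d)) ∂μ) * μ Set.univ ^ (r.toReal - 1) := by
            rw [lintegral_lintegral_swap]
            exact (hm2.pow_const r.toReal).aemeasurable
        _ = _ := by
            simp only [fun z => lint_trans _ hper (τ z), lintegral_const]
            rw [mul_assoc, mul_comm]
            congr 1
            nth_rw 1 [← ENNReal.rpow_one (μ Set.univ)]
            rw [← ENNReal.rpow_add_of_nonneg _ _ zero_le_one (by linarith)]
            congr 1; ring
    calc _ ≤ (μ Set.univ ^ r.toReal * ∫⁻ x, h x ^ r.toReal ∂(muQ d)) ^ (1 / r.toReal) :=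
          ENNReal.rpow_le_rpow big (by positivity)
      _ = _ := by
          rw [ENNReal.mul_rpow_of_nonneg _ _ (by positivity), ← ENNReal.rpow_mul,
            mul_one_div_cancel hrpos.ne', ENNReal.rpow_one]


abbrev ee {d : ℕ} (i : Fin d) : Vec d := Pi.single i 1

lemma kernel (d : ℕ) : ∃ φ : Vec d → ℝ, ContDiff ℝ (⊤ : ℕ∞) φ ∧ HasCompactSupport φ ∧
    ∫ z, φ z = 1 ∧ ∀ i j z, z j * fderiv ℝ φ z (ee i) = z i * fderiv ℝ φ z (ee j) := by
  let q : Vec d → ℝ := fun z => 2 - ∑ i, z i ^ 2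
  let φ : Vec d → ℝ := fun z => Real.smoothTransition (q z)
  have hq : ContDiff ℝ (⊤ : ℕ∞) q := by fun_prop
  have hφ : ContDiff ℝ (⊤ : ℕ∞) φ := Real.smoothTransition.contDiff.comp hq
  have hs : HasCompactSupport φ := by
    apply HasCompactSupport.intro (isCompact_closedBall (0 : Vec d) 2)
    intro z hz
    apply Real.smoothTransition.zero_of_nonpos
    have : ∃ i, 2 < |z i| := by
      by_contra hc
      push Not at hc
      apply hz
      rw [mem_closedBall_zero_iff, pi_norm_le_iff_of_nonneg (by norm_num)]
      exact hc
    obtain ⟨i, hi⟩ := this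
    have h1 : z i ^ 2 ≤ ∑ i, z i ^ 2 :=
      Finset.single_le_sum (f := fun i => z i ^ 2) (fun _ _ => sq_nonneg _) (Finset.mem_univ i)
    have h2 : 4 ≤ z i ^ 2 := by
      rw [← sq_abs]; nlinarith
    simp only [q]; linarith
  have hpos : 0 < ∫ z, φ z := by
    apply hφ.continuous.integral_pos_of_hasCompactSupport_nonneg_nonzero hs
    · intro z; exact Real.smoothTransition.nonneg _
    · show φ 0 ≠ 0
      have : φ 0 = 1 := Real.smoothTransition.one_of_one_le (by simp [q])
      rw [this]; exact one_ne_zero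
  have hd : ∀ z i, fderiv ℝ φ z (ee i) = deriv Real.smoothTransition (q z) * (- (2 * z i)) := by
    intro z i
    have h1 : HasFDerivAt q (-∑ j, (2 * z j) • (ContinuousLinearMap.proj j : Vec d →L[ℝ] ℝ)) z := by
      refine HasFDerivAt.const_sub (c := 2) ?_
      refine HasFDerivAt.fun_sum fun j _ => ?_
      have := (hasFDerivAt_apply (𝕜 := ℝ) j z).pow 2
      simpa using this
    have h2 : HasDerivAt Real.smoothTransition (deriv Real.smoothTransition (q z)) (q z) :=
      ((Real.smoothTransition.contDiff (n := 1)).differentiable (by norm_num) _).hasDerivAt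
    have h3 := h2.comp_hasFDerivAt z h1
    have h4 : fderiv ℝ φ z = _ := h3.fderiv
    rw [h4]
    simp [Pi.single_apply]
  refine ⟨fun z => (∫ z, φ z)⁻¹ * φ z, contDiff_const.mul hφ, hs.mul_left, ?_, ?_⟩
  · rw [integral_const_mul, inv_mul_cancel₀ hpos.ne']
  · intro i j z
    rw [fderiv_const_mul (hφ.differentiable (by simp) z)]
    simp only [_root_.smul_apply, hd, smul_eq_mul]
    ring

lemma ibp {d : ℕ} (k w : Vec d → ℝ) (hk : ContDiff ℝ 1 k) (hks : HasCompactSupport k)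
    (hw : ContDiff ℝ 1 w) (x : Vec d) (s : ℝ) (e : Vec d) :
    s * ∫ z, k z * fderiv ℝ w (x + s • z) e = - ∫ z, fderiv ℝ k z e * w (x + s • z) := by
  have hg : ContDiff ℝ 1 (fun z : Vec d => w (x + s • z)) := by fun_prop
  have hd : ∀ z, fderiv ℝ (fun z : Vec d => w (x + s • z)) z e = s * fderiv ℝ w (x + s • z) e := by
    intro z
    have h1 : HasFDerivAt (fun z : Vec d => x + s • z) (s • ContinuousLinearMap.id ℝ (Vec d)) z :=
      ((hasFDerivAt_id z).const_smul s).const_add x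
    have h2 := ((hw.differentiable (by norm_num)) (x + s • z)).hasFDerivAt.comp z h1
    have h3 : fderiv ℝ (fun z : Vec d => w (x + s • z)) z = _ := h2.fderiv
    rw [h3]; simp
  have hkc := hk.continuous_fderiv (by norm_num)
  have hgc := hg.continuous_fderiv (by norm_num)
  have hks' : HasCompactSupport (fun z => fderiv ℝ k z e) :=
    (hks.fderiv ℝ).comp_left (g := fun L : Vec d →L[ℝ] ℝ => L e) (by simp)
  have := integral_mul_fderiv_eq_neg_fderiv_mul_of_integrable (μ := (volume : Measure (Vec d)))
    (f := k) (g := fun z : Vec d => w (x + s • z)) (v := e)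
    (Continuous.integrable_of_hasCompactSupport
      ((hkc.clm_apply continuous_const).mul hg.continuous) hks'.mul_right)
    (Continuous.integrable_of_hasCompactSupport
      (hk.continuous.mul (hgc.clm_apply continuous_const)) hks.mul_right)
    (Continuous.integrable_of_hasCompactSupport (hk.continuous.mul hg.continuous) hks.mul_right)
    (fun z _ => hk.differentiable (by norm_num) z) (fun z _ => hg.differentiable (by norm_num) z)
  rw [← this, ← integral_const_mul]
  congr 1; ext z; rw [hd]; ring

lemma ibp_symm {d : ℕ} (φ w : Vec d → ℝ) (hφ : ContDiff ℝ 1 φ) (hs : HasCompactSupport φ)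
    (hsym : ∀ i j z, z j * fderiv ℝ φ z (ee i) = z i * fderiv ℝ φ z (ee j))
    (hw : ContDiff ℝ 1 w) (x : Vec d) (s : ℝ) (hs0 : s ≠ 0) (i j : Fin d) :
    ∫ z, (z j * φ z) * fderiv ℝ w (x + s • z) (ee i) =
      ∫ z, (z i * φ z) * fderiv ℝ w (x + s • z) (ee j) := by
  have hk : ∀ i : Fin d, ContDiff ℝ 1 (fun z : Vec d => z i * φ z) := fun i => by fun_prop
  have hks : ∀ i : Fin d, HasCompactSupport (fun z : Vec d => z i * φ z) := fun i => hs.mul_left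
  have h1 := ibp _ w (hk j) (hks j) hw x s (ee i)
  have h2 := ibp _ w (hk i) (hks i) hw x s (ee j)
  have hd : ∀ (i j : Fin d) z, fderiv ℝ (fun z : Vec d => z j * φ z) z (ee i) =
      (if i = j then φ z else 0) + z j * fderiv ℝ φ z (ee i) := by
    intro i j z
    have h3 := (hasFDerivAt_apply (𝕜 := ℝ) j z).mul
      ((hφ.differentiable (by norm_num)) z).hasFDerivAt
    have h4 : fderiv ℝ (fun z : Vec d => z j * φ z) z = _ := h3.fderiv
    rw [h4]
    simp [Pi.single_apply, eq_comm, add_comm]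
  have : s * ∫ z, (z j * φ z) * fderiv ℝ w (x + s • z) (ee i) =
      s * ∫ z, (z i * φ z) * fderiv ℝ w (x + s • z) (ee j) := by
    rw [h1, h2]
    congr 2; ext z
    rw [hd, hd, hsym i j z]
    simp only [eq_comm]
  exact mul_left_cancel₀ hs0 this

lemma clm_sum {d : ℕ} (L : Vec d →L[ℝ] ℝ) (z : Vec d) : L z = ∑ j, z j * L (ee j) := by
  conv_lhs => rw [pi_eq_sum_univ' z]
  simp only [map_sum, map_smul, smul_eq_mul]

lemma rep {d : ℕ} (φ u : Vec d → ℝ) (hφ : ContDiff ℝ (⊤ : ℕ∞) φ) (hs : HasCompactSupport φ)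
    (h1 : ∫ z, φ z = 1)
    (hsym : ∀ i j z, z j * fderiv ℝ φ z (ee i) = z i * fderiv ℝ φ z (ee j))
    (hu : ContDiff ℝ (⊤ : ℕ∞) u) (x : Vec d) (S : ℝ) (hS : 0 < S) (i : Fin d) :
    gradV u x i = - (S⁻¹ * ∫ z, fderiv ℝ φ z (ee i) * u (x + S • z))
      - ∫ s in Set.Ioc 0 S, ∫ z, (z i * φ z) * laplV u (x + s • z) := by
  let v : Fin d → Vec d → ℝ := fun j y => fderiv ℝ u y (ee j)
  have hv : ∀ j, ContDiff ℝ (⊤ : ℕ∞) (v j) := fun j =>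
    (hu.fderiv_right (m := (⊤ : ℕ∞)) (by simp)).clm_apply contDiff_const
  have hv1 : ∀ j, ContDiff ℝ 1 (v j) := fun j => (hv j).of_le (by exact_mod_cast le_top)
  have hvc : ∀ j, Continuous (fderiv ℝ (v j)) := fun j => (hv1 j).continuous_fderiv (by norm_num)
  have hφ1 : ContDiff ℝ 1 φ := hφ.of_le (by exact_mod_cast le_top)
  have hsw : ∀ j y, fderiv ℝ (v i) y (ee j) = fderiv ℝ (v j) y (ee i) := by
    intro j y
    have hdd : DifferentiableAt ℝ (fderiv ℝ u) y :=
      (hu.fderiv_right (m := (⊤ : ℕ∞)) (by simp)).differentiable (by simp) y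
    have hx : ∀ j e, fderiv ℝ (v j) y e = fderiv ℝ (fderiv ℝ u) y e (ee j) := by
      intro j e
      have := (hdd.hasFDerivAt.clm_apply (hasFDerivAt_const (ee j) y)).fderiv
      have h' : fderiv ℝ (v j) y = _ := this
      rw [h']; simp
    rw [hx, hx]
    exact (hu.contDiffAt.isSymmSndFDerivAt (by simp only [minSmoothness_of_isRCLikeNormedField]; exact WithTop.coe_le_coe.2 (le_top : (2 : ℕ∞) ≤ ⊤))).eq _ _
  -- inner identity
  have hin : ∀ s : ℝ, s ≠ 0 → ∫ z, φ z * fderiv ℝ (v i) (x + s • z) z =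
      ∫ z, (z i * φ z) * laplV u (x + s • z) := by
    intro s hs0
    have hint : ∀ (j k l : Fin d), Integrable
        (fun z : Vec d => (z j * φ z) * fderiv ℝ (v k) (x + s • z) (ee l)) := fun j k l =>
      Continuous.integrable_of_hasCompactSupport
        (((continuous_apply j).mul hφ.continuous).mul
          (((hvc k).comp (by fun_prop)).clm_apply continuous_const)) (hs.mul_left.mul_right)
    calc _ = ∫ z, ∑ j, (z j * φ z) * fderiv ℝ (v j) (x + s • z) (ee i) := by
          congr 1; ext z
          rw [clm_sum, Finset.mul_sum]
          refine Finset.sum_congr rfl fun j _ => ?_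
          rw [hsw]; ring
      _ = ∑ j, ∫ z, (z j * φ z) * fderiv ℝ (v j) (x + s • z) (ee i) :=
          integral_finsetSum _ fun j _ => hint _ _ _
      _ = ∑ j, ∫ z, (z i * φ z) * fderiv ℝ (v j) (x + s • z) (ee j) :=
          Finset.sum_congr rfl fun j _ => ibp_symm φ (v j) hφ1 hs hsym (hv1 j) x s hs0 i j
      _ = ∫ z, ∑ j, (z i * φ z) * fderiv ℝ (v j) (x + s • z) (ee j) :=
          (integral_finsetSum _ fun j _ => hint _ _ _).symm
      _ = _ := by
          congr 1; ext z
          rw [← Finset.mul_sum]; rfl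
  -- FTC
  have hftc : ∀ z, v i (x + S • z) - v i x =
      ∫ s in Set.Ioc 0 S, fderiv ℝ (v i) (x + s • z) z := by
    intro z
    rw [← intervalIntegral.integral_of_le hS.le]
    have := intervalIntegral.integral_eq_sub_of_hasDerivAt (a := 0) (b := S)
      (f := fun s : ℝ => v i (x + s • z)) (f' := fun s => fderiv ℝ (v i) (x + s • z) z)
      (by
        intro s _
        have h1 : HasDerivAt (fun s : ℝ => x + s • z) z s := by
          simpa using ((hasDerivAt_id s).smul_const z).const_add x
        exact ((hv1 i).differentiable (by norm_num) _).hasFDerivAt.comp_hasDerivAt s h1)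
      (Continuous.intervalIntegrable
        (((hvc i).comp (by fun_prop)).clm_apply continuous_const) _ _)
    rw [this]; simp
  let K := tsupport φ
  have hK : IsCompact K := hs
  have hz : ∀ z, z ∉ K → φ z = 0 := fun z hz => image_eq_zero_of_notMem_tsupport hz
  have hswap : ∫ z, φ z * (v i (x + S • z) - v i x) =
      ∫ s in Set.Ioc 0 S, ∫ z, φ z * fderiv ℝ (v i) (x + s • z) z := by
    have e1 : ∫ z, φ z * (v i (x + S • z) - v i x) =
        ∫ z in K, ∫ s in Set.Ioc 0 S, φ z * fderiv ℝ (v i) (x + s • z) z := by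
      rw [← setIntegral_eq_integral_of_forall_compl_eq_zero (s := K)
        (fun z h => by simp [hz z h])]
      congr 1; ext z
      rw [integral_const_mul, hftc]
    have e2 : ∀ s : ℝ, ∫ z, φ z * fderiv ℝ (v i) (x + s • z) z =
        ∫ z in K, φ z * fderiv ℝ (v i) (x + s • z) z := fun s =>
      (setIntegral_eq_integral_of_forall_compl_eq_zero (s := K)
        (fun z h => by simp [hz z h])).symm
    simp only [e1, e2]
    refine integral_integral_swap ?_
    rw [Measure.prod_restrict]
    refine IntegrableOn.mono_set (t := K ×ˢ Set.Icc 0 S) ?_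
      (Set.prod_mono le_rfl Set.Ioc_subset_Icc_self)
    refine ContinuousOn.integrableOn_compact (hK.prod isCompact_Icc) (Continuous.continuousOn ?_)
    exact (hφ.continuous.comp continuous_fst).mul
      (((hvc i).comp (by fun_prop)).clm_apply continuous_fst)
  have hleft : ∫ z, φ z * (v i (x + S • z) - v i x) =
      (∫ z, φ z * v i (x + S • z)) - v i x := by
    simp only [mul_sub]
    rw [integral_sub, integral_mul_const, h1, one_mul]
    · exact Continuous.integrable_of_hasCompactSupport
        (hφ.continuous.mul ((hv i).continuous.comp (by fun_prop))) hs.mul_right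
    · exact Continuous.integrable_of_hasCompactSupport
        (hφ.continuous.mul continuous_const) hs.mul_right
  have hfirst : ∫ z, φ z * v i (x + S • z) =
      - (S⁻¹ * ∫ z, fderiv ℝ φ z (ee i) * u (x + S • z)) := by
    have := ibp φ u hφ1 hs (hu.of_le (by exact_mod_cast le_top)) x S (ee i)
    have h2 : ∫ z, φ z * v i (x + S • z) = S⁻¹ * (S * ∫ z, φ z * fderiv ℝ u (x + S • z) (ee i)) := by
      rw [inv_mul_cancel_left₀ hS.ne']
    rw [h2, this]; ring
  have hlast : ∫ s in Set.Ioc 0 S, ∫ z, φ z * fderiv ℝ (v i) (x + s • z) z =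
      ∫ s in Set.Ioc 0 S, ∫ z, (z i * φ z) * laplV u (x + s • z) :=
    setIntegral_congr_fun measurableSet_Ioc fun s hs => hin s hs.1.ne'
  have hg : gradV u x i = v i x := rfl
  rw [hg, ← hlast, ← hswap, hleft, hfirst]
  ring


lemma lapl_cont {d : ℕ} (u : Vec d → ℝ) (hu : ContDiff ℝ (⊤ : ℕ∞) u) : Continuous (laplV u) := by
  have hv : ∀ j : Fin d, ContDiff ℝ (⊤ : ℕ∞) (fun y => fderiv ℝ u y (ee j)) := fun j =>
    (hu.fderiv_right (m := (⊤ : ℕ∞)) (by simp)).clm_apply contDiff_const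
  have : laplV u = fun x => ∑ j, fderiv ℝ (fun y => fderiv ℝ u y (ee j)) x (ee j) := rfl
  rw [this]
  exact continuous_finsetSum _ fun j _ =>
    ((hv j).continuous_fderiv (by simp)).clm_apply continuous_const

lemma grad_cont {d : ℕ} (u : Vec d → ℝ) (hu : ContDiff ℝ (⊤ : ℕ∞) u) : Continuous (gradV u) :=
  continuous_pi fun _ => (hu.continuous_fderiv (by simp)).clm_apply continuous_const

lemma fderiv_per {d : ℕ} {u : Vec d → ℝ} (hp : ZPer u) : ZPer (fderiv ℝ u) := by
  intro x k
  rw [← fderiv_comp_add_right]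
  congr 1; ext y; exact hp y k

lemma grad_per {d : ℕ} {u : Vec d → ℝ} (hp : ZPer u) : ZPer (gradV u) := by
  intro x k
  ext i
  simp only [gradV, fderiv_per hp x k]

lemma repbound (d : ℕ) : ∃ (K : Set (Vec d)) (B : ℝ), IsCompact K ∧ 0 ≤ B ∧
    ∀ u : Vec d → ℝ, ContDiff ℝ (⊤ : ℕ∞) u → ∀ S : ℝ, 0 < S → ∀ x,
    ‖gradV u x‖ₑ ≤ ENNReal.ofReal (B / S) * (∫⁻ z in K, ‖u (x + S • z)‖ₑ) +
      ENNReal.ofReal B * ∫⁻ p, ‖laplV u (x + p.1 • p.2)‖ₑ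
        ∂((volume.restrict (Set.Ioc 0 S)).prod (volume.restrict K)) := by
  obtain ⟨φ, hφ, hs, h1, hsym⟩ := kernel d
  have hfc := hφ.continuous_fderiv (by simp)
  obtain ⟨B1, hB1⟩ := (hs.fderiv ℝ).exists_bound_of_continuous hfc
  obtain ⟨B2, hB2⟩ := (hs.smul_right (f' := fun z : Vec d => z)).exists_bound_of_continuous
    (hφ.continuous.smul continuous_id)
  have hB1' : ∀ z (i : Fin d), ‖fderiv ℝ φ z (ee i)‖ ≤ |B1| + |B2| := by
    intro z i
    have := (fderiv ℝ φ z).le_opNorm (ee i)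
    have h2 : ‖(ee i : Vec d)‖ = 1 := by simp [ee, Pi.norm_single]
    rw [h2, mul_one] at this
    linarith [hB1 z, le_abs_self B1, abs_nonneg B2]
  have hB2' : ∀ z (i : Fin d), ‖z i * φ z‖ ≤ |B1| + |B2| := by
    intro z i
    have := norm_le_pi_norm (φ z • z) i
    have h2 := hB2 z
    simp only [Pi.smul_apply', Pi.smul_apply, smul_eq_mul] at this h2
    rw [mul_comm]
    linarith [le_abs_self B2, abs_nonneg B1]
  set B := |B1| + |B2| with hB
  have hB0 : 0 ≤ B := by positivity
  refine ⟨tsupport φ, B, hs, hB0, fun u hu S hS x => ?_⟩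
  have hz : ∀ z, z ∉ tsupport φ → φ z = 0 := fun z hz => image_eq_zero_of_notMem_tsupport hz
  have hz' : ∀ z, z ∉ tsupport φ → fderiv ℝ φ z = 0 := fun z hz => by
    by_contra hc
    exact hz (support_fderiv_subset ℝ hc)
  have hlc := lapl_cont u hu
  -- enough for each coordinate
  set RHS := ENNReal.ofReal (B / S) * (∫⁻ z in tsupport φ, ‖u (x + S • z)‖ₑ) +
      ENNReal.ofReal B * ∫⁻ p, ‖laplV u (x + p.1 • p.2)‖ₑ
        ∂((volume.restrict (Set.Ioc 0 S)).prod (volume.restrict (tsupport φ))) with hR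
  have hcoord : ∀ i, ‖gradV u x i‖ₑ ≤ RHS := by
    intro i
    rw [rep φ u hφ hs h1 hsym hu x S hS i]
    rw [hR]
    refine (enorm_sub_le).trans (add_le_add ?_ ?_)
    · rw [enorm_neg, enorm_mul, ← setIntegral_eq_integral_of_forall_compl_eq_zero
        (s := tsupport φ) (fun z h => by simp [hz' z h])]
      have e1 : ‖S⁻¹‖ₑ = ENNReal.ofReal S⁻¹ := Real.enorm_of_nonneg (by positivity)
      rw [e1, div_eq_inv_mul, ENNReal.ofReal_mul (by positivity), mul_assoc]
      gcongr
      refine (enorm_integral_le_lintegral_enorm _).trans ?_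
      rw [← lintegral_const_mul' _ _ ENNReal.ofReal_ne_top]
      refine lintegral_mono fun z => ?_
      rw [enorm_mul]
      gcongr
      rw [← ofReal_norm]
      exact ENNReal.ofReal_le_ofReal (hB1' z i)
    · refine (enorm_integral_le_lintegral_enorm _).trans ?_
      rw [lintegral_prod _ (by
        apply Continuous.aemeasurable
        exact (hlc.comp (by fun_prop)).enorm)]
      rw [← lintegral_const_mul' _ _ ENNReal.ofReal_ne_top]
      refine lintegral_mono fun s => ?_
      rw [← setIntegral_eq_integral_of_forall_compl_eq_zero
        (s := tsupport φ) (fun z h => by simp [hz z h])]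
      refine (enorm_integral_le_lintegral_enorm _).trans ?_
      rw [← lintegral_const_mul' _ _ ENNReal.ofReal_ne_top]
      refine lintegral_mono fun z => ?_
      rw [enorm_mul]
      gcongr
      rw [← ofReal_norm]
      exact ENNReal.ofReal_le_ofReal (hB2' z i)
  rcases eq_or_ne RHS ∞ with ht | ht
  · rw [ht]; exact le_top
  rw [← ofReal_norm, ← ENNReal.ofReal_toReal ht]
  apply ENNReal.ofReal_le_ofReal
  rw [pi_norm_le_iff_of_nonneg ENNReal.toReal_nonneg]
  intro i
  have := ENNReal.toReal_mono ht (hcoord i)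
  simpa using this

lemma fderiv_le {d : ℕ} (u : Vec d → ℝ) (x y : Vec d) (hy : ∀ i, |y i| ≤ 1) :
    ‖fderiv ℝ u x y‖ ≤ d * ‖gradV u x‖ := by
  rw [clm_sum]
  refine (norm_sum_le _ _).trans ?_
  have : ∀ j ∈ Finset.univ, ‖y j * fderiv ℝ u x (ee j)‖ ≤ ‖gradV u x‖ := by
    intro j _
    rw [norm_mul]
    have h1 := norm_le_pi_norm (gradV u x) j
    have h2 : ‖fderiv ℝ u x (ee j)‖ ≤ ‖gradV u x‖ := h1
    have h3 : ‖y j‖ ≤ 1 := hy j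
    nlinarith [norm_nonneg (fderiv ℝ u x (ee j)), norm_nonneg (y j)]
  refine (Finset.sum_le_sum this).trans ?_
  simp

lemma poinc {d : ℕ} (u : Vec d → ℝ) (hu : ContDiff ℝ (⊤ : ℕ∞) u) (hp : ZPer u)
    (h0 : ∫ x in fundCube d, u x = 0) (x : Vec d) :
    ‖u x‖ₑ ≤ ENNReal.ofReal d * ∫⁻ p, ‖gradV u (x + p.1 • p.2)‖ₑ
        ∂((volume.restrict (Set.Ioc (0 : ℝ) 1)).prod (muQ d)) := by
  have hcu := hu.continuous
  have hfc := hu.continuous_fderiv (by simp)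
  have hcomp : IsCompact (fundCube d) := isCompact_Icc
  have hmean : ∫ y, u (x + y) ∂(muQ d) = 0 := by
    have := int_trans u hp x
    simp only [add_comm x]
    rw [this]; exact h0
  have hrep : u x = ∫ y, (u x - u (x + y)) ∂(muQ d) := by
    rw [integral_sub (integrable_const _), hmean]
    · simp
    · exact ContinuousOn.integrableOn_compact hcomp
        (hcu.comp (continuous_const.add continuous_id)).continuousOn
  have hpt : ∀ y ∈ fundCube d, ‖u x - u (x + y)‖ₑ ≤
      ENNReal.ofReal d * ∫⁻ s in Set.Ioc (0 : ℝ) 1, ‖gradV u (x + s • y)‖ₑ := by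
    intro y hy
    have hy1 : ∀ i, |y i| ≤ 1 := fun i => by
      rw [abs_le]; exact ⟨by linarith [show (0:ℝ) ≤ y i from hy.1 i], hy.2 i⟩
    have := intervalIntegral.integral_eq_sub_of_hasDerivAt (a := 0) (b := 1)
      (f := fun s : ℝ => u (x + s • y)) (f' := fun s => fderiv ℝ u (x + s • y) y)
      (by
        intro s _
        have h1 : HasDerivAt (fun s : ℝ => x + s • y) y s := by
          simpa using ((hasDerivAt_id s).smul_const y).const_add x
        exact (hu.differentiable (by simp) _).hasFDerivAt.comp_hasDerivAt s h1)
      (Continuous.intervalIntegrable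
        ((hfc.comp (by fun_prop)).clm_apply continuous_const) _ _)
    simp only [one_smul, zero_smul, add_zero] at this
    rw [← enorm_neg, neg_sub, ← this, intervalIntegral.integral_of_le zero_le_one]
    refine (enorm_integral_le_lintegral_enorm _).trans ?_
    rw [← lintegral_const_mul' _ _ ENNReal.ofReal_ne_top]
    refine lintegral_mono fun s => ?_
    rw [← ofReal_norm, ← ofReal_norm, ← ENNReal.ofReal_mul (by positivity)]
    exact ENNReal.ofReal_le_ofReal (fderiv_le u _ y hy1)
  have hgc := grad_cont u hu
  calc ‖u x‖ₑ = ‖∫ y, (u x - u (x + y)) ∂(muQ d)‖ₑ := by rw [← hrep]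
    _ ≤ ∫⁻ y, ‖u x - u (x + y)‖ₑ ∂(muQ d) := enorm_integral_le_lintegral_enorm _
    _ ≤ ∫⁻ y, ENNReal.ofReal d * (∫⁻ s in Set.Ioc (0 : ℝ) 1, ‖gradV u (x + s • y)‖ₑ) ∂(muQ d) :=
        setLIntegral_mono' measurableSet_Icc hpt
    _ = ENNReal.ofReal d * ∫⁻ y, (∫⁻ s in Set.Ioc (0 : ℝ) 1, ‖gradV u (x + s • y)‖ₑ) ∂(muQ d) :=
        lintegral_const_mul' _ _ ENNReal.ofReal_ne_top
    _ = _ := by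
        congr 1
        rw [lintegral_prod_symm _ (by
          apply Continuous.aemeasurable
          exact (hgc.comp (by fun_prop)).enorm)]


lemma sc {d : ℕ} (r : ℝ≥0∞) (f g : Vec d → ℝ≥0∞) (c : ℝ)
    (h : ∀ x ∈ fundCube d, f x ≤ ENNReal.ofReal c * g x) :
    eLpNorm f r (muQ d) ≤ ENNReal.ofReal c * eLpNorm g r (muQ d) := by
  refine eLpNorm_le_nnreal_smul_eLpNorm_of_ae_le_mul' (c := c.toNNReal) ?_ r
  exact ae_restrict_of_forall_mem measurableSet_Icc h

lemma CkN_bound {d : ℕ} (a : Vec d → ℝ) (ha : ContDiff ℝ (⊤ : ℕ∞) a) :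
    0 ≤ CkN 1 a ∧ ∀ x ∈ fundCube d, |a x| ≤ CkN 1 a ∧ ‖fderiv ℝ a x‖ ≤ CkN 1 a := by
  have hb : ∀ i : ℕ, BddAbove ((fun x => ‖iteratedFDeriv ℝ i a x‖) '' fundCube d) := by
    intro i
    apply IsCompact.bddAbove_image isCompact_Icc
    exact ((ha.continuous_iteratedFDeriv (m := i) (by
      exact_mod_cast (le_top : ((i : ℕ∞)) ≤ ⊤))).norm).continuousOn
  have hn : ∀ i : ℕ, 0 ≤ sSup ((fun x => ‖iteratedFDeriv ℝ i a x‖) '' fundCube d) := by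
    intro i
    apply Real.sSup_nonneg
    rintro _ ⟨x, _, rfl⟩
    exact norm_nonneg _
  have hC : CkN 1 a = sSup ((fun x => ‖iteratedFDeriv ℝ 0 a x‖) '' fundCube d) +
      sSup ((fun x => ‖iteratedFDeriv ℝ 1 a x‖) '' fundCube d) := by
    simp [CkN, Finset.sum_range_succ]
  rw [hC]
  refine ⟨add_nonneg (hn 0) (hn 1), fun x hx => ⟨?_, ?_⟩⟩
  · have := le_csSup (hb 0) ⟨x, hx, rfl⟩
    simp only [norm_iteratedFDeriv_zero, Real.norm_eq_abs] at this
    have h1 := hn 1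
    simp only [norm_iteratedFDeriv_zero, Real.norm_eq_abs] at *
    linarith
  · have h3 : ‖iteratedFDeriv ℝ 1 a x‖ ≤
        sSup ((fun x => ‖iteratedFDeriv ℝ 1 a x‖) '' fundCube d) := le_csSup (hb 1) ⟨x, hx, rfl⟩
    have h1 := hn 0
    have h2 : ‖iteratedFDeriv ℝ 1 a x‖ = ‖fderiv ℝ a x‖ := norm_iteratedFDeriv_one _
    linarith

lemma grad_le {d : ℕ} (u : Vec d → ℝ) (x : Vec d) : ‖gradV u x‖ ≤ ‖fderiv ℝ u x‖ := by
  rw [pi_norm_le_iff_of_nonneg (norm_nonneg _)]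
  intro i
  have := (fderiv ℝ u x).le_opNorm (ee i)
  have h2 : ‖(ee i : Vec d)‖ = 1 := by simp [ee, Pi.norm_single]
  rw [h2, mul_one] at this
  exact this

lemma dot_le {d : ℕ} (a b : Vec d) : |dotV a b| ≤ d * ‖a‖ * ‖b‖ := by
  refine (Finset.abs_sum_le_sum_abs _ _).trans ?_
  have : ∀ j ∈ Finset.univ, |a j * b j| ≤ ‖a‖ * ‖b‖ := by
    intro j _
    rw [abs_mul]
    exact mul_le_mul (norm_le_pi_norm a j) (norm_le_pi_norm b j) (abs_nonneg _) (norm_nonneg _)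
  refine (Finset.sum_le_sum this).trans ?_
  simp [mul_assoc]

lemma enorm_per {d : ℕ} {E : Type*} [NormedAddCommGroup E] {f : Vec d → E} (h : ZPer f) :
    ZPer (fun x => ‖f x‖ₑ) := fun x k => by simp only [h x k]

/-- The elliptic estimate. -/
lemma elliptic (d : ℕ) (r : ℝ≥0∞) (hr : 1 ≤ r) : ∃ C : ℝ, 0 ≤ C ∧
    ∀ u g : Vec d → ℝ, ContDiff ℝ (⊤ : ℕ∞) u → ZPer u → (∫ x in fundCube d, u x) = 0 →
      Continuous g → ZPer g → (∀ x, laplV u x = g x - ∫ y in fundCube d, g y) →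
      eLpNorm (fun x => ‖gradV u x‖ₑ) r (muQ d) ≤
        ENNReal.ofReal C * eLpNorm (fun x => ‖g x‖ₑ) r (muQ d) := by
  obtain ⟨K, B, hK, hB, hrep⟩ := repbound d
  have hKf : volume K ≠ ∞ := hK.measure_lt_top.ne
  have : IsFiniteMeasure (volume.restrict K) := ⟨by simpa using hK.measure_lt_top⟩
  set k := (volume K).toReal with hk
  have hk0 : 0 ≤ k := ENNReal.toReal_nonneg
  have hKk : volume K = ENNReal.ofReal k := (ENNReal.ofReal_toReal hKf).symm
  let S : ℝ := 2 * B * k * d + 1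
  have hS : 0 < S := by positivity
  have hhalf : B / S * k * d ≤ 1 / 2 := by
    have : B / S * k * d = (B * k * d) / S := by ring
    rw [this, div_le_iff₀ hS]; simp only [S]; nlinarith
  refine ⟨4 * B * S * k, by positivity, fun u g hu hp h0 hgc hgp hlap => ?_⟩
  set A := eLpNorm (fun x => ‖gradV u x‖ₑ) r (muQ d) with hA
  set G := eLpNorm (fun x => ‖g x‖ₑ) r (muQ d) with hG
  have hgrc := grad_cont u hu
  have hlc := lapl_cont u hu
  have hlper : ZPer (laplV u) := fun x k => by rw [hlap, hlap, hgp x k]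
  -- finiteness
  have hAfin : A ≠ ∞ := by
    obtain ⟨M, hM⟩ := (isCompact_Icc : IsCompact (fundCube d)).exists_bound_of_continuousOn
      hgrc.continuousOn
    have := sc r (fun x => ‖gradV u x‖ₑ) (fun _ => 1) M (fun x hx => by
      rw [mul_one, ← ofReal_norm]; exact ENNReal.ofReal_le_ofReal (hM x hx))
    refine ne_top_of_le_ne_top ?_ this
    rw [eLpNorm_const _ (lt_of_lt_of_le one_pos hr).ne' (IsProbabilityMeasure.ne_zero _)]
    simp
  -- Poincare
  have hP : eLpNorm (fun x => ‖u x‖ₑ) r (muQ d) ≤ ENNReal.ofReal d * A := by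
    refine (sc r _ _ d (fun x _ => poinc u hu hp h0 x)).trans ?_
    gcongr
    refine (mink r hr ((volume.restrict (Set.Ioc (0 : ℝ) 1)).prod (muQ d))
      (fun p => p.1 • p.2) (by fun_prop) (fun x => ‖gradV u x‖ₑ) hgrc.enorm.measurable
      (enorm_per (grad_per hp))).trans ?_
    rw [← Set.univ_prod_univ, Measure.prod_prod]
    simp
    rfl
  -- the right side
  have hL : eLpNorm (fun x => ‖laplV u x‖ₑ) r (muQ d) ≤ 2 * G := by
    have h1 : ∀ x, ‖laplV u x‖ₑ ≤ ‖g x‖ₑ + ∫⁻ y, ‖g (x + y)‖ₑ ∂(muQ d) := by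
      intro x
      rw [hlap x]
      refine (enorm_sub_le).trans (add_le_add le_rfl ?_)
      refine (enorm_integral_le_lintegral_enorm _).trans ?_
      have := lint_trans _ (enorm_per hgp) x
      simp only [add_comm x]
      rw [this]
    have h2 := mink r hr (muQ d) id measurable_id (fun x => ‖g x‖ₑ) hgc.enorm.measurable
      (enorm_per hgp)
    rw [measure_univ, one_mul] at h2
    calc _ ≤ eLpNorm ((fun x => ‖g x‖ₑ) + (fun x => ∫⁻ y, ‖g (x + y)‖ₑ ∂(muQ d))) r (muQ d) :=
          eLpNorm_mono_enorm (fun x => by simpa using h1 x)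
      _ ≤ G + eLpNorm (fun x => ∫⁻ y, ‖g (x + y)‖ₑ ∂(muQ d)) r (muQ d) := by
          refine eLpNorm_add_le hgc.enorm.measurable.aestronglyMeasurable ?_ hr
          exact (Measurable.lintegral_prod_right' (f := fun q : Vec d × Vec d => ‖g (q.1 + q.2)‖ₑ)
            (hgc.comp (by fun_prop)).enorm.measurable).aestronglyMeasurable
      _ ≤ 2 * G := by rw [two_mul]; gcongr; exact h2
  have hm1 := mink r hr (volume.restrict K) (fun z => S • z) (by fun_prop) (fun x => ‖u x‖ₑ)
    hu.continuous.enorm.measurable (enorm_per hp)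
  have hm2 := mink r hr ((volume.restrict (Set.Ioc 0 S)).prod (volume.restrict K))
    (fun p => p.1 • p.2) (by fun_prop) (fun x => ‖laplV u x‖ₑ) hlc.enorm.measurable
    (enorm_per hlper)
  rw [← Set.univ_prod_univ, Measure.prod_prod] at hm2
  simp only [Measure.restrict_apply_univ, Real.volume_Ioc, sub_zero, hKk] at hm1 hm2
  have main : A ≤ ENNReal.ofReal (B / S) * (ENNReal.ofReal k * (ENNReal.ofReal d * A)) +
      ENNReal.ofReal B * (ENNReal.ofReal S * ENNReal.ofReal k * (2 * G)) := by
    calc A ≤ eLpNorm ((fun x => ENNReal.ofReal (B / S) * ∫⁻ z in K, ‖u (x + S • z)‖ₑ) +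
          (fun x => ENNReal.ofReal B * ∫⁻ p, ‖laplV u (x + p.1 • p.2)‖ₑ
            ∂((volume.restrict (Set.Ioc 0 S)).prod (volume.restrict K)))) r (muQ d) :=
          eLpNorm_mono_enorm (fun x => by simpa using hrep u hu S hS x)
      _ ≤ _ := by
          refine (eLpNorm_add_le ?_ ?_ hr).trans (add_le_add ?_ ?_)
          · exact ((Measurable.lintegral_prod_right'
              (f := fun q : Vec d × Vec d => ‖u (q.1 + S • q.2)‖ₑ)
              (hu.continuous.comp (by fun_prop)).enorm.measurable).const_mul _).aestronglyMeasurable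
          · exact ((Measurable.lintegral_prod_right'
              (f := fun q : Vec d × (ℝ × Vec d) => ‖laplV u (q.1 + q.2.1 • q.2.2)‖ₑ)
              (hlc.comp (by fun_prop)).enorm.measurable).const_mul _).aestronglyMeasurable
          · refine (sc r _ _ _ (fun x _ => le_rfl)).trans ?_
            gcongr
            exact hm1.trans (by gcongr)
          · refine (sc r _ _ _ (fun x _ => le_rfl)).trans ?_
            gcongr
            exact hm2.trans (by gcongr)
  have hc1 : ENNReal.ofReal (B / S) * (ENNReal.ofReal k * (ENNReal.ofReal d * A)) ≤ A / 2 := by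
    rw [← mul_assoc, ← mul_assoc, ← ENNReal.ofReal_mul (by positivity),
      ← ENNReal.ofReal_mul (by positivity)]
    calc _ ≤ ENNReal.ofReal (1 / 2) * A := by gcongr
      _ = _ := by
        rw [ENNReal.ofReal_div_of_pos two_pos, ENNReal.div_eq_inv_mul, ENNReal.div_eq_inv_mul]
        simp
  set X := ENNReal.ofReal B * (ENNReal.ofReal S * ENNReal.ofReal k * (2 * G)) with hX
  have h3 : A / 2 + A / 2 ≤ A / 2 + X := by
    rw [ENNReal.add_halves]
    exact main.trans (by gcongr)
  have h4 : A / 2 ≤ X := by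
    refine (ENNReal.add_le_add_iff_left ?_).1 h3
    exact (ENNReal.div_lt_top hAfin (by norm_num)).ne
  calc A = A / 2 + A / 2 := (ENNReal.add_halves A).symm
    _ ≤ X + X := add_le_add h4 h4
    _ = _ := by
      have e : ENNReal.ofReal (4 * B * S * k) =
          4 * ENNReal.ofReal B * ENNReal.ofReal S * ENNReal.ofReal k := by
        rw [ENNReal.ofReal_mul (by positivity), ENNReal.ofReal_mul (by positivity),
          ENNReal.ofReal_mul (by positivity)]
        simp
      rw [e, hX]; ring

end BAD

/-- **Bound for the bilinear anti-divergence operator** (Lemma 2.2): for `d ≥ 2`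
and `r ∈ [1,∞]` there is `C = C(d,r)` with
`‖𝓑(a,f)‖_{L^r} ≤ C‖a‖_{C¹}‖ℛf‖_{L^r}` for all `a, f ∈ C^∞(𝕋^d)`, where
`ℛf = ∇u_f` (with `Δu_f = f − ⨍f`, `u_f` periodic with zero mean) and
`𝓑(a,f) = aℛf − ℛ(∇a·ℛf)`. -/
theorem bilinear_antidivergence_bound (d : ℕ) (hd : 2 ≤ d)
    (r : ℝ≥0∞) (hr : 1 ≤ r) :
    ∃ C : ℝ, 0 < C ∧
      ∀ (a f uf ug : Vec d → ℝ),
        ContDiff ℝ (⊤ : ℕ∞) a → ZPer a →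
        ContDiff ℝ (⊤ : ℕ∞) f → ZPer f →
        ContDiff ℝ (⊤ : ℕ∞) uf → ZPer uf → (∫ x in fundCube d, uf x) = 0 →
        (∀ x, laplV uf x = f x - ∫ y in fundCube d, f y) →
        ContDiff ℝ (⊤ : ℕ∞) ug → ZPer ug → (∫ x in fundCube d, ug x) = 0 →
        (∀ x, laplV ug x = dotV (gradV a x) (gradV uf x)
          - ∫ y in fundCube d, dotV (gradV a y) (gradV uf y)) →
        spLp r (fun x => a x • gradV uf x - gradV ug x)
          ≤ ENNReal.ofReal (C * CkN 1 a) * spLp r (gradV uf) := by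
  obtain ⟨C, hC, hell⟩ := BAD.elliptic d r hr
  refine ⟨1 + C * d, by positivity, ?_⟩
  intro a f uf ug ha hap hf hfp huf hufp huf0 hlapf hug hugp hug0 hlapg
  obtain ⟨hN, hab⟩ := BAD.CkN_bound a ha
  set N := CkN 1 a
  have hgac := BAD.grad_cont a ha
  have hgfc := BAD.grad_cont uf huf
  have hggc := BAD.grad_cont ug hug
  have hgc : Continuous (fun x => dotV (gradV a x) (gradV uf x)) := by
    simp only [dotV]
    exact continuous_finsetSum _ fun i _ =>
      ((continuous_apply i).comp hgac).mul ((continuous_apply i).comp hgfc)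
  have hgp : ZPer (fun x => dotV (gradV a x) (gradV uf x)) := fun x k => by
    simp only [BAD.grad_per hap x k, BAD.grad_per hufp x k]
  have h1 := hell ug _ hug hugp hug0 hgc hgp hlapg
  have h2 : eLpNorm (fun x => ‖dotV (gradV a x) (gradV uf x)‖ₑ) r (BAD.muQ d) ≤
      ENNReal.ofReal (d * N) * eLpNorm (fun x => ‖gradV uf x‖ₑ) r (BAD.muQ d) := by
    refine BAD.sc r _ _ _ fun x hx => ?_
    rw [← ofReal_norm, ← ofReal_norm, ← ENNReal.ofReal_mul (by positivity)]
    apply ENNReal.ofReal_le_ofReal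
    refine (BAD.dot_le _ _).trans ?_
    gcongr
    exact (BAD.grad_le a x).trans (hab x hx).2
  have h3 : eLpNorm (fun x => ‖a x • gradV uf x‖ₑ) r (BAD.muQ d) ≤
      ENNReal.ofReal N * eLpNorm (fun x => ‖gradV uf x‖ₑ) r (BAD.muQ d) := by
    refine BAD.sc r _ _ _ fun x hx => ?_
    rw [enorm_smul]
    gcongr
    rw [← ofReal_norm]
    exact ENNReal.ofReal_le_ofReal (hab x hx).1
  rw [BAD.spLp_eq r hr, BAD.spLp_eq r hr]
  set F := eLpNorm (fun x => ‖gradV uf x‖ₑ) r (BAD.muQ d)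
  calc _ ≤ eLpNorm ((fun x => ‖a x • gradV uf x‖ₑ) + (fun x => ‖gradV ug x‖ₑ)) r (BAD.muQ d) :=
        eLpNorm_mono_enorm (fun x => by
          simp only [enorm_eq_self, Pi.add_apply]; exact enorm_sub_le)
    _ ≤ ENNReal.ofReal N * F + ENNReal.ofReal C * (ENNReal.ofReal (d * N) * F) := by
        refine (eLpNorm_add_le ?_ ?_ hr).trans (add_le_add h3 (h1.trans (by gcongr)))
        · exact (ha.continuous.smul hgfc).enorm.measurable.aestronglyMeasurable
        · exact hggc.enorm.measurable.aestronglyMeasurable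
    _ = _ := by
        rw [← mul_assoc, ← ENNReal.ofReal_mul hC, ← add_mul,
          ← ENNReal.ofReal_add hN (by positivity)]
        congr 2; ring
end

section
/- Let d ≥ 1 and r ∈ [1,∞]. There is a constant C_r (depending only on r and d) such that for every σ ∈ ℕ₊ and all a, f ∈ C^∞(𝕋^d), the improved Hölder inequality holds: | ‖a(·) f(σ·)‖_{L^r(𝕋^d)} − ‖a‖_{L^r(𝕋^d)} ‖f‖_{L^r(𝕋^d)} | ≤ C_r σ^{−1/r} ‖a‖_{C^1} ‖f‖_{L^r(𝕋^d)}. -/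
open MeasureTheory ENNReal

/-- The cube measure. -/
noncomputable def cubeMeas (d : ℕ) : Measure (Vec d) := volume.restrict (fundCube d)

theorem cubeMeas_eq (d : ℕ) :
    cubeMeas d = volume.restrict (ZSpan.fundamentalDomain (Pi.basisFun ℝ (Fin d))) := by
  rw [ZSpan.fundamentalDomain_pi_basisFun]
  exact (Measure.restrict_congr_set Measure.univ_pi_Ico_ae_eq_Icc).symm

instance cubeMeas_prob (d : ℕ) : IsProbabilityMeasure (cubeMeas d) := by
  constructor
  simp [cubeMeas, fundCube, Real.volume_Icc_pi]

theorem ZPer.vadd {d : ℕ} {α : Type*} {f : Vec d → α} (hf : ZPer f)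
    (g : Submodule.span ℤ (Set.range (Pi.basisFun ℝ (Fin d)))) (x : Vec d) :
    f (g +ᵥ x) = f x := by
  have h := ((Pi.basisFun ℝ (Fin d)).mem_span_iff_repr_mem ℤ (g : Vec d)).mp g.2
  choose k hk using h
  have : (g +ᵥ x : Vec d) = x + fun i => (k i : ℝ) := by
    ext i
    have := hk i
    simp at this
    simp [Submodule.vadd_def, this, add_comm]
  rw [this, hf]

instance span_invariant (d : ℕ) : VAddInvariantMeasure
    (Submodule.span ℤ (Set.range (Pi.basisFun ℝ (Fin d)))) (Fin d → ℝ) volume :=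
  ⟨fun c s _ => measure_preimage_add volume (c : Fin d → ℝ) s⟩

theorem lintegral_shift {d : ℕ} {G : Vec d → ℝ≥0∞} (hG : ZPer G) (t : Vec d) :
    ∫⁻ x, G (x + t) ∂(cubeMeas d) = ∫⁻ x, G x ∂(cubeMeas d) := by
  rw [cubeMeas_eq]
  set D := ZSpan.fundamentalDomain (Pi.basisFun ℝ (Fin d)) with hD
  have h1 := ZSpan.isAddFundamentalDomain (Pi.basisFun ℝ (Fin d)) (volume : Measure (Vec d))
  have h2 := h1.vadd_of_comm t
  have h3 := h1.setLIntegral_eq h2 G (fun g x => hG.vadd g x)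
  rw [h3]
  have h4 := (measurePreserving_add_right (volume : Measure (Vec d)) t).setLIntegral_comp_emb
    (measurableEmbedding_addRight t) G D
  rw [h4]
  congr 2
  ext x
  simp only [Set.mem_vadd_set, Set.mem_image, vadd_eq_add, add_comm t]
  rfl

theorem spLp_eq {d : ℕ} {r : ℝ≥0∞} (hr : 1 ≤ r) (hr' : r ≠ ∞) (f : Vec d → ℝ) :
    spLp r f = (∫⁻ x, ‖f x‖ₑ ^ r.toReal ∂(cubeMeas d)) ^ (1 / r.toReal) := by
  simp only [spLp, eLpGen, if_neg hr', cubeMeas]; rfl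

theorem exists_int_shift {d : ℕ} (x : Vec d) :
    ∃ k : Fin d → ℤ, (x + fun i => (k i : ℝ)) ∈ fundCube d := by
  refine ⟨fun i => -⌊x i⌋, ?_, ?_⟩ <;> intro i
  · have := Int.floor_le (x i); simp; linarith
  · have := Int.lt_floor_add_one (x i); simp; linarith

theorem sSup_bound {d : ℕ} {a : Vec d → ℝ} (ha : ContDiff ℝ (⊤ : ℕ∞) a) (hp : ZPer a) (n : ℕ) :
    ∀ x, ‖iteratedFDeriv ℝ n a x‖ ≤
      sSup ((fun x => ‖iteratedFDeriv ℝ n a x‖) '' fundCube d) := by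
  intro x
  obtain ⟨k, hk⟩ := exists_int_shift x
  have hc : Continuous (fun x => ‖iteratedFDeriv ℝ n a x‖) :=
    (ha.continuous_iteratedFDeriv (by exact_mod_cast le_top)).norm
  have hb : BddAbove ((fun x => ‖iteratedFDeriv ℝ n a x‖) '' fundCube d) :=
    (isCompact_Icc.image hc).bddAbove
  have he : iteratedFDeriv ℝ n a (x + fun i => (k i : ℝ)) = iteratedFDeriv ℝ n a x := by
    have h := iteratedFDeriv_comp_add_right (𝕜 := ℝ) (f := a) n (fun i => (k i : ℝ)) x
    rw [← h]
    congr 1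
    ext y
    exact hp y k
  rw [← he]
  exact le_csSup hb ⟨_, hk, rfl⟩

theorem a_bounds {d : ℕ} {a : Vec d → ℝ} (ha : ContDiff ℝ (⊤ : ℕ∞) a) (hp : ZPer a) :
    0 ≤ CkN 1 a ∧ (∀ x, ‖a x‖ ≤ CkN 1 a) ∧ ∀ x y, ‖a y - a x‖ ≤ CkN 1 a * ‖y - x‖ := by
  have h0 := sSup_bound ha hp 0
  have h1 := sSup_bound ha hp 1
  simp only [CkN, Finset.sum_range_succ, Finset.range_zero, Finset.sum_empty, zero_add]
  set S0 := sSup ((fun x => ‖iteratedFDeriv ℝ 0 a x‖) '' fundCube d)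
  set S1 := sSup ((fun x => ‖iteratedFDeriv ℝ 1 a x‖) '' fundCube d)
  have p0 : 0 ≤ S0 := (norm_nonneg _).trans (h0 0)
  have p1 : 0 ≤ S1 := (norm_nonneg _).trans (h1 0)
  refine ⟨by positivity, fun x => ?_, fun x y => ?_⟩
  · have := h0 x
    rw [norm_iteratedFDeriv_zero] at this
    linarith
  · refine (convex_univ (𝕜 := ℝ)).norm_image_sub_le_of_norm_fderiv_le (𝕜 := ℝ) (f := a)
      (C := S0 + S1) (fun x _ => ?_) (fun x _ => ?_) (Set.mem_univ x) (Set.mem_univ y)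
    · exact (ha.differentiable (by simp)) x
    · have := h1 x
      rw [norm_iteratedFDeriv_one] at this
      linarith

theorem spLp_lt_top {d : ℕ} {r : ℝ≥0∞} (hr : 1 ≤ r) (hr' : r ≠ ∞) {f : Vec d → ℝ}
    {M : ℝ} (hM : ∀ x, ‖f x‖ ≤ M) : spLp r f ≠ ∞ := by
  have : spLp r f = eLpNorm f r (cubeMeas d) := by
    rw [spLp_eq hr hr', eLpNorm_eq_lintegral_rpow_enorm_toReal (by positivity) hr']
  rw [this]
  refine ((eLpNorm_le_of_ae_bound (Filter.Eventually.of_forall hM)).trans_lt ?_).ne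
  simp

theorem case_fin {d : ℕ} {r : ℝ≥0∞} (hr : 1 ≤ r) (hr' : r ≠ ∞) {σ : ℕ} (hσ : 0 < σ)
    {a f : Vec d → ℝ} (ha : ContDiff ℝ (⊤ : ℕ∞) a) (hap : ZPer a)
    (hf : ContDiff ℝ (⊤ : ℕ∞) f) (hfp : ZPer f) :
    |(spLp r (fun x => a x * f ((σ : ℝ) • x))).toReal
          - (spLp r a).toReal * (spLp r f).toReal|
        ≤ (CkN 1 a * (σ : ℝ)⁻¹) * (spLp r f).toReal := by
  obtain ⟨hK, haB, haL⟩ := a_bounds ha hap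
  obtain ⟨-, hfB, -⟩ := a_bounds hf hfp
  set K := CkN 1 a
  set μ := cubeMeas d
  have hr0 : r ≠ 0 := by positivity
  have hrpos : 0 < r.toReal := ENNReal.toReal_pos hr0 hr'
  have hσ' : (0:ℝ) < σ := by exact_mod_cast hσ
  have hac := ha.continuous
  have hfc := hf.continuous
  have key := fun G => eLpNorm_eq_lintegral_rpow_enorm_toReal (ε := ℝ) (f := G) (μ := μ.prod μ) hr0 hr'
  let F1 : Vec d × Vec d → ℝ := fun z => a (z.1 + (σ:ℝ)⁻¹ • z.2) * f ((σ:ℝ) • z.1 + z.2)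
  let F2 : Vec d × Vec d → ℝ := fun z => a z.1 * f ((σ:ℝ) • z.1 + z.2)
  let F3 : Vec d × Vec d → ℝ := fun z => f ((σ:ℝ) • z.1 + z.2)
  have c1 : Continuous F1 := by fun_prop
  have c2 : Continuous F2 := by fun_prop
  have c3 : Continuous F3 := by fun_prop
  have perf : ZPer (fun x => ‖f x‖ₑ ^ r.toReal) := fun x k => by simp only [hfp x k]
  have shf : ∀ x, ∫⁻ y, ‖f ((σ:ℝ) • x + y)‖ₑ ^ r.toReal ∂μ = ∫⁻ y, ‖f y‖ₑ ^ r.toReal ∂μ := by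
    intro x
    have := lintegral_shift perf ((σ:ℝ) • x)
    simpa only [add_comm] using this
  have e3 : eLpNorm F3 r (μ.prod μ) = spLp r f := by
    rw [key, spLp_eq hr hr', lintegral_prod _ (by fun_prop)]
    simp only [F3, shf]
    simp [μ]
  have e2 : eLpNorm F2 r (μ.prod μ) = spLp r a * spLp r f := by
    rw [key, spLp_eq hr hr', spLp_eq hr hr', lintegral_prod _ (by fun_prop),
      ← ENNReal.mul_rpow_of_nonneg _ _ (by positivity)]
    congr 1
    simp only [F2, enorm_mul, ENNReal.mul_rpow_of_nonneg _ _ hrpos.le]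
    rw [← lintegral_mul_const _ (by fun_prop)]
    refine lintegral_congr fun x => ?_
    have hm : Continuous (fun y => ‖f ((σ:ℝ) • x + y)‖ₑ ^ r.toReal) := by fun_prop
    rw [lintegral_const_mul _ hm.measurable, shf]
  have e1 : eLpNorm F1 r (μ.prod μ) = spLp r (fun x => a x * f ((σ : ℝ) • x)) := by
    rw [key, spLp_eq hr hr', lintegral_prod_symm _ (by fun_prop)]
    have perg : ZPer (fun x => ‖a x * f ((σ : ℝ) • x)‖ₑ ^ r.toReal) := fun x k => by
      have h := hfp ((σ : ℝ) • x) (fun i => (σ : ℤ) * k i)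
      have h' : (σ : ℝ) • (x + fun i => (k i : ℝ))
          = (σ : ℝ) • x + fun i => (((σ : ℤ) * k i : ℤ) : ℝ) := by
        ext i; simp [mul_add]
      simp only [hap x k, h', h]
    have : ∀ y, ∫⁻ x, ‖F1 (x, y)‖ₑ ^ r.toReal ∂μ
        = ∫⁻ x, ‖a x * f ((σ : ℝ) • x)‖ₑ ^ r.toReal ∂μ := by
      intro y
      rw [← lintegral_shift perg ((σ:ℝ)⁻¹ • y)]
      simp only [F1, smul_add, smul_inv_smul₀ hσ'.ne']
      rfl
    simp only [this]
    simp [μ]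
  have e4 : eLpNorm (F1 - F2) r (μ.prod μ) ≤ ENNReal.ofReal (K * (σ:ℝ)⁻¹) * spLp r f := by
    rw [← e3]
    refine eLpNorm_le_mul_eLpNorm_of_ae_le_mul ?_ r
    have hy : ∀ᵐ z ∂(μ.prod μ), z.2 ∈ fundCube d := by
      have : ∀ᵐ y ∂μ, y ∈ fundCube d := ae_restrict_mem measurableSet_Icc
      exact Measure.quasiMeasurePreserving_snd.ae this
    filter_upwards [hy] with z hz
    have hn : ‖z.2‖ ≤ 1 := by
      rw [pi_norm_le_iff_of_nonneg zero_le_one]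
      intro i
      rw [Real.norm_eq_abs, abs_le]
      have h1 := hz.1 i
      have h2 := hz.2 i
      simp at h1 h2
      constructor <;> linarith
    have : (F1 - F2) z = (a (z.1 + (σ:ℝ)⁻¹ • z.2) - a z.1) * F3 z := by
      simp [F1, F2, F3, sub_mul]
    rw [this, norm_mul]
    gcongr
    refine (haL _ _).trans ?_
    rw [add_sub_cancel_left, norm_smul, norm_inv, Real.norm_natCast]
    gcongr
    exact mul_le_of_le_one_right (by positivity) hn
  have m1 : AEStronglyMeasurable F1 (μ.prod μ) := c1.aestronglyMeasurable
  have m2 : AEStronglyMeasurable F2 (μ.prod μ) := c2.aestronglyMeasurable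
  have t1 : eLpNorm F1 r (μ.prod μ) ≤ eLpNorm F2 r (μ.prod μ) + eLpNorm (F1 - F2) r (μ.prod μ) := by
    have := eLpNorm_add_le m2 (m1.sub m2) hr
    rwa [add_sub_cancel] at this
  have t2 : eLpNorm F2 r (μ.prod μ) ≤ eLpNorm F1 r (μ.prod μ) + eLpNorm (F1 - F2) r (μ.prod μ) := by
    have := eLpNorm_sub_le m1 (m1.sub m2) hr
    rwa [_root_.sub_sub_cancel] at this
  rw [e1, e2] at t1 t2
  have fa : spLp r a ≠ ∞ := spLp_lt_top hr hr' haB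
  have ff : spLp r f ≠ ∞ := spLp_lt_top hr hr' hfB
  have faf : spLp r a * spLp r f ≠ ∞ := ENNReal.mul_ne_top fa ff
  have fE : ENNReal.ofReal (K * (σ:ℝ)⁻¹) * spLp r f ≠ ∞ := ENNReal.mul_ne_top (by simp) ff
  have s1 := t1.trans (add_le_add_right e4 _)
  have s2 := t2.trans (add_le_add_right e4 _)
  have f1 : spLp r (fun x => a x * f ((σ : ℝ) • x)) ≠ ∞ :=
    (s1.trans_lt (ENNReal.add_lt_top.2 ⟨faf.lt_top, fE.lt_top⟩)).ne
  have r1 := ENNReal.toReal_mono (ENNReal.add_ne_top.2 ⟨faf, fE⟩) s1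
  have r2 := ENNReal.toReal_mono (ENNReal.add_ne_top.2 ⟨f1, fE⟩) s2
  rw [ENNReal.toReal_add faf fE, ENNReal.toReal_mul, ENNReal.toReal_mul,
    ENNReal.toReal_ofReal (by positivity)] at r1
  rw [ENNReal.toReal_add f1 fE, ENNReal.toReal_mul, ENNReal.toReal_mul,
    ENNReal.toReal_ofReal (by positivity)] at r2
  rw [abs_le]
  constructor <;> linarith

theorem ae_scale {d : ℕ} {σ : ℕ} (hσ : 0 < σ) {f : Vec d → ℝ} (hf : ZPer f) (M : ℝ≥0∞)
    (h : ∀ᵐ x ∂(cubeMeas d), ‖f x‖ₑ ≤ M) :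
    ∀ᵐ x ∂(cubeMeas d), ‖f ((σ:ℝ) • x)‖ₑ ≤ M := by
  have hσ' : (σ:ℝ) ≠ 0 := by exact_mod_cast hσ.ne'
  have h1 := ZSpan.isAddFundamentalDomain (Pi.basisFun ℝ (Fin d)) (volume : Measure (Vec d))
  have hs : MeasurableSet (ZSpan.fundamentalDomain (Pi.basisFun ℝ (Fin d))) :=
    ZSpan.fundamentalDomain_measurableSet _
  have h2 : volume {x : Vec d | ¬ ‖f x‖ₑ ≤ M} = 0 := by
    refine h1.measure_zero_of_invariant _ (fun g => ?_) ?_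
    · ext x
      rw [Set.mem_vadd_set_iff_neg_vadd_mem]
      simp only [Set.mem_setOf_eq, hf.vadd]
    · rw [cubeMeas_eq, ae_iff, Measure.restrict_apply' hs] at h
      exact h
  have h3 : ∀ᵐ x ∂(volume : Measure (Vec d)), ‖f ((σ:ℝ) • x)‖ₑ ≤ M := by
    rw [ae_iff]
    have := Measure.addHaar_preimage_smul (volume : Measure (Vec d)) hσ' {x : Vec d | ¬ ‖f x‖ₑ ≤ M}
    rw [h2, mul_zero] at this
    exact this
  exact ae_restrict_of_ae h3

theorem case_top {d : ℕ} {σ : ℕ} (hσ : 0 < σ)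
    {a f : Vec d → ℝ} (ha : ContDiff ℝ (⊤ : ℕ∞) a) (hap : ZPer a)
    (hf : ContDiff ℝ (⊤ : ℕ∞) f) (hfp : ZPer f) :
    |(spLp ∞ (fun x => a x * f ((σ : ℝ) • x))).toReal
          - (spLp ∞ a).toReal * (spLp ∞ f).toReal|
        ≤ CkN 1 a * (spLp ∞ f).toReal := by
  obtain ⟨hK, haB, -⟩ := a_bounds ha hap
  obtain ⟨hKf, hfB, -⟩ := a_bounds hf hfp
  have hs : ∀ g : Vec d → ℝ, spLp ∞ g = essSup (fun x => ‖g x‖ₑ) (cubeMeas d) := fun g => by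
    simp only [spLp, eLpGen, cubeMeas]; rfl
  have bd : ∀ (g : Vec d → ℝ) (M : ℝ), (∀ x, ‖g x‖ ≤ M) → spLp ∞ g ≤ ENNReal.ofReal M := by
    intro g M hM
    rw [hs]
    refine essSup_le_of_ae_le _ (Filter.Eventually.of_forall fun x => ?_)
    simp only [← ofReal_norm]
    exact ENNReal.ofReal_le_ofReal (hM x)
  have ba := bd a _ haB
  have ff : spLp ∞ f ≠ ∞ := ((bd f _ hfB).trans_lt ENNReal.ofReal_lt_top).ne
  have hae : ∀ᵐ x ∂(cubeMeas d), ‖f ((σ:ℝ) • x)‖ₑ ≤ spLp ∞ f := by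
    refine ae_scale hσ hfp _ ?_
    rw [hs]
    exact ENNReal.ae_le_essSup _
  have b1 : spLp ∞ (fun x => a x * f ((σ : ℝ) • x)) ≤ ENNReal.ofReal (CkN 1 a) * spLp ∞ f := by
    rw [hs (fun x => a x * f ((σ : ℝ) • x))]
    refine essSup_le_of_ae_le _ ?_
    filter_upwards [hae] with x hx
    rw [enorm_mul]
    refine mul_le_mul' ?_ hx
    rw [← ofReal_norm]
    exact ENNReal.ofReal_le_ofReal (haB x)
  have r1 := ENNReal.toReal_mono (ENNReal.mul_ne_top (by simp) ff) b1
  rw [ENNReal.toReal_mul, ENNReal.toReal_ofReal hK] at r1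
  have r2 := ENNReal.toReal_mono (by simp) ba
  rw [ENNReal.toReal_ofReal hK] at r2
  have r3 : (spLp ∞ a).toReal * (spLp ∞ f).toReal ≤ CkN 1 a * (spLp ∞ f).toReal := by gcongr
  have q1 : 0 ≤ (spLp ∞ (fun x => a x * f ((σ : ℝ) • x))).toReal := ENNReal.toReal_nonneg
  have q2 : 0 ≤ (spLp ∞ a).toReal * (spLp ∞ f).toReal := by positivity
  rw [abs_le]
  constructor <;> linarith

/-- **Improved Hölder inequality** (Lemma 2.4 / [MS18, Lemma 2.1]): for `d ≥ 1`
and `r ∈ [1,∞]` there is `C_r` such that for all `σ ∈ ℕ₊` and smooth periodic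
`a, f` on `𝕋^d`,
`| ‖a(·)f(σ·)‖_{L^r} − ‖a‖_{L^r}‖f‖_{L^r} | ≤ C_r σ^{−1/r} ‖a‖_{C¹} ‖f‖_{L^r}`. -/
theorem improved_holder_inequality (d : ℕ) (hd : 1 ≤ d)
    (r : ℝ≥0∞) (hr : 1 ≤ r) :
    ∃ C : ℝ, 0 < C ∧ ∀ (σ : ℕ), 0 < σ → ∀ (a f : Vec d → ℝ),
      ContDiff ℝ (⊤ : ℕ∞) a → ZPer a →
      ContDiff ℝ (⊤ : ℕ∞) f → ZPer f →
      |(spLp r (fun x => a x * f ((σ : ℝ) • x))).toReal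
          - (spLp r a).toReal * (spLp r f).toReal|
        ≤ C * (σ : ℝ) ^ (-(1 / r).toReal) * CkN 1 a * (spLp r f).toReal := by
  refine ⟨1, one_pos, fun σ hσ a f ha hap hf hfp => ?_⟩
  have hK := (a_bounds ha hap).1
  have hσ1 : (1:ℝ) ≤ σ := by exact_mod_cast hσ
  by_cases hr' : r = ∞
  · subst hr'
    simpa using case_top hσ ha hap hf hfp
  · refine (case_fin hr hr' hσ ha hap hf hfp).trans ?_
    have h : (σ:ℝ)⁻¹ ≤ (σ:ℝ) ^ (-(1 / r).toReal) := by
      rw [← Real.rpow_neg_one]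
      refine Real.rpow_le_rpow_of_exponent_le hσ1 (neg_le_neg ?_)
      have : (1 / r) ≤ 1 := by simpa using hr
      simpa using ENNReal.toReal_mono (by simp) this
    rw [one_mul, mul_comm (CkN 1 a)]
    gcongr
end

section
/- Let d ≥ 1 and let n ≥ 0 be an even integer. There is a constant C_n (depending only on n and d) such that for every σ ∈ ℕ₊, every a ∈ C^∞(𝕋^d), and every f ∈ C^∞(𝕋^d) with zero mean (⨍f = 0), one has | ∫_{𝕋^d} a(x) f(σx) dx | ≤ C_n σ^{−n} ‖a‖_{C^n} ‖f‖_{L^2(𝕋^d)}. -/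
open MeasureTheory ENNReal

instance omb_fact : Fact ((0:ℝ) < 1) := ⟨one_pos⟩

lemma omb_restrict (d : ℕ) : (volume.restrict (fundCube d) : Measure (Vec d)) =
    Measure.pi (fun _ : Fin d => (volume : Measure ℝ).restrict (Set.Ioc 0 (0+1))) := by
  rw [← Measure.restrict_pi_pi, ← volume_pi]
  refine Measure.restrict_congr_set ?_
  have := (Measure.univ_pi_Ioc_ae_eq_Icc (μ := fun _ : Fin d => (volume : Measure ℝ))
    (f := 0) (g := 1)).symm
  simpa [fundCube, volume_pi] using this

lemma omb_integral {d : ℕ} (f : Vec d → ℝ) (hf : Continuous f) (hp : ZPer f) (σ : ℕ) (hσ : 0 < σ)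
    (c : Vec d) :
    ∫ x in fundCube d, f ((σ : ℝ) • x + c) = ∫ x in fundCube d, f x := by
  rw [omb_restrict]
  set μ := Measure.pi (fun _ : Fin d => (volume : Measure ℝ).restrict (Set.Ioc 0 (0+1)))
  let P : Vec d → (Fin d → AddCircle (1:ℝ)) := fun x i => (x i : AddCircle (1:ℝ))
  let ν : Measure (Fin d → AddCircle (1:ℝ)) := Measure.pi (fun _ => volume)
  have hP : MeasurePreserving P μ ν :=
    measurePreserving_pi _ _ (fun i => AddCircle.measurePreserving_mk 1 0)
  let T : (Fin d → AddCircle (1:ℝ)) → (Fin d → AddCircle (1:ℝ)) :=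
    fun y i => (σ : ℤ) • y i + (c i : AddCircle (1:ℝ))
  have hT : MeasurePreserving T ν ν := by
    refine measurePreserving_pi _ _ (f := fun i y => (σ : ℤ) • y + (c i : AddCircle (1:ℝ)))
      (fun i => ?_)
    have h1 : MeasurePreserving (fun y : AddCircle (1:ℝ) => (σ : ℤ) • y) volume volume :=
      Measure.measurePreserving_zsmul volume (by exact_mod_cast hσ.ne')
    exact (measurePreserving_add_right volume (c i : AddCircle (1:ℝ))).comp h1
  let F : (Fin d → AddCircle (1:ℝ)) → ℝ :=
    fun y => f (fun i => (AddCircle.measurableEquivIoc 1 0 (y i) : ℝ))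
  have hF : Measurable F := by
    refine hf.measurable.comp (measurable_pi_lambda _ fun i => ?_)
    exact measurable_subtype_coe.comp
      ((AddCircle.measurableEquivIoc 1 0).measurable.comp (measurable_pi_apply i))
  have hFP : ∀ x, F (P x) = f x := by
    intro x
    have : ∀ i, ∃ k : ℤ, (AddCircle.measurableEquivIoc 1 0 (P x i) : ℝ) = x i + k := by
      intro i
      have h : (((AddCircle.measurableEquivIoc 1 0 (P x i) : ℝ)) : AddCircle (1:ℝ)) = (x i) :=
        (AddCircle.measurableEquivIoc 1 0).symm_apply_apply (P x i)
      obtain ⟨k, hk⟩ := QuotientAddGroup.eq_iff_sub_mem.1 h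
      refine ⟨k, ?_⟩
      simp at hk
      linarith
    choose k hk using this
    simp only [F, hk]
    exact hp x k
  have hTP : ∀ x, T (P x) = P ((σ : ℝ) • x + c) := by
    intro x
    ext i
    simp [T, P]
  have e1 : ∫ x, f ((σ : ℝ) • x + c) ∂μ = ∫ y, F y ∂ν := by
    rw [← (hT.comp hP).map_eq, integral_map (hT.comp hP).aemeasurable hF.aestronglyMeasurable]
    simp [hTP, hFP]
  have e2 : ∫ x, f x ∂μ = ∫ y, F y ∂ν := by
    rw [← hP.map_eq, integral_map hP.aemeasurable hF.aestronglyMeasurable]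
    simp [hFP]
  rw [e1, e2]

/-- periodicity with respect to `τ ℤ^d` -/
def OmbPer {d : ℕ} {E : Type*} (τ : ℝ) (g : Vec d → E) : Prop :=
  ∀ (x : Vec d) (k : Fin d → ℤ), g (x + τ • (fun i => (k i : ℝ))) = g x

lemma OmbPer.fderiv {d : ℕ} {E : Type} [NormedAddCommGroup E] [NormedSpace ℝ E] {τ : ℝ}
    {g : Vec d → E} (h : OmbPer τ g) : OmbPer τ (fderiv ℝ g) := by
  intro x k
  rw [← fderiv_comp_add_right]
  congr 1
  ext y
  exact h y k

lemma omb_fderiv_step {d : ℕ} {E : Type} [NormedAddCommGroup E] [NormedSpace ℝ E] {τ : ℝ}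
    (hτ : 0 < τ) {g : Vec d → E} (hg : ContDiff ℝ (⊤ : ℕ∞) g) (h : OmbPer τ g) {K : ℝ}
    (hK : ∀ x, ‖fderiv ℝ (fderiv ℝ g) x‖ ≤ K) (x : Vec d) :
    ‖fderiv ℝ g x‖ ≤ (d * τ) * K := by
  have hK0 : 0 ≤ K := le_trans (norm_nonneg (fderiv ℝ (fderiv ℝ g) 0)) (hK 0)
  have hg1 : ContDiff ℝ (⊤ : ℕ∞) (fderiv ℝ g) := hg.fderiv_right (by simp)
  have hd0 : Differentiable ℝ g := hg.differentiable (by simp)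
  have hd1 : Differentiable ℝ (fderiv ℝ g) := hg1.differentiable (by simp)
  have key : ∀ i : Fin d, ‖fderiv ℝ g x (Pi.single i 1)‖ ≤ τ * K := by
    intro i
    let v : Vec d := τ • Pi.single i 1
    have hv : ‖v‖ = τ := by simp [v, norm_smul, abs_of_pos hτ, Pi.norm_single]
    have hb : ∀ y ∈ Metric.closedBall x τ, ‖fderiv ℝ g y - fderiv ℝ g x‖ ≤ K * τ := by
      intro y hy
      refine (convex_univ.norm_image_sub_le_of_norm_fderiv_le (fun z _ => hd1 z)
        (fun z _ => hK z) (Set.mem_univ x) (Set.mem_univ y)).trans ?_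
      gcongr
      simpa [dist_eq_norm] using hy
    have := (convex_closedBall x τ).norm_image_sub_le_of_norm_fderiv_le'
      (f := g) (φ := fderiv ℝ g x) (x := x) (y := x + v) (fun z _ => hd0 z) hb (by simp [hτ.le])
      (by simp [hv])
    have hper : g (x + v) = g x := by
      have := h x (Pi.single i 1)
      convert this using 4
      ext j
      by_cases hj : j = i
      · subst hj; simp
      · simp [hj]
    rw [hper, sub_self, zero_sub, norm_neg, add_sub_cancel_left, hv, map_smul, norm_smul,
      Real.norm_of_nonneg hτ.le] at this
    nlinarith
  refine ContinuousLinearMap.opNorm_le_bound _ (by positivity) (fun w => ?_)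
  have hw : w = ∑ i, w i • (Pi.single i 1 : Vec d) := pi_eq_sum_univ' w
  calc ‖fderiv ℝ g x w‖ = ‖∑ i, w i • fderiv ℝ g x (Pi.single i 1)‖ := by
        conv_lhs => rw [hw]
        simp only [map_sum, map_smul]
    _ ≤ ∑ i : Fin d, ‖w‖ * (τ * K) := by
        refine norm_sum_le_of_le _ fun i _ => ?_
        rw [norm_smul]
        gcongr
        · exact norm_le_pi_norm w i
        · exact key i
    _ = d * τ * K * ‖w‖ := by simp; ring

lemma omb_fderiv_iter {d : ℕ} {τ : ℝ} (hτ : 0 < τ) (m : ℕ) :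
    ∀ {E : Type} [NormedAddCommGroup E] [NormedSpace ℝ E]
    {g : Vec d → E} (_ : ContDiff ℝ (⊤ : ℕ∞) g) (_ : OmbPer τ g) {K : ℝ}
    (_ : ∀ x, ‖iteratedFDeriv ℝ (m + 1) g x‖ ≤ K) (x : Vec d),
    ‖fderiv ℝ g x‖ ≤ (d * τ) ^ m * K := by
  induction m with
  | zero =>
    intro E _ _ g hg h K hK x
    have := hK x
    rw [← norm_iteratedFDeriv_fderiv, norm_iteratedFDeriv_zero] at this
    simpa using this
  | succ m ih =>
    intro E _ _ g hg h K hK x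
    have hg1 : ContDiff ℝ (⊤ : ℕ∞) (fderiv ℝ g) := hg.fderiv_right (by simp)
    have h2 := ih hg1 h.fderiv (K := K) (fun y => by
      rw [norm_iteratedFDeriv_fderiv]; exact hK y)
    refine (omb_fderiv_step hτ hg h h2 x).trans (le_of_eq ?_)
    ring

lemma omb_osc {d : ℕ} {τ : ℝ} (hτ : 0 < τ) {g : Vec d → ℝ} (hg : ContDiff ℝ (⊤ : ℕ∞) g)
    (h : OmbPer τ g) {K : ℝ} (hK : ∀ x, ‖fderiv ℝ g x‖ ≤ K) (x : Vec d) :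
    |g x - g 0| ≤ τ * K := by
  have hK0 : 0 ≤ K := (norm_nonneg _).trans (hK 0)
  let y : Vec d := fun i => τ * Int.fract (x i / τ)
  have hxy : g x = g y := by
    rw [← h y (fun i => ⌊x i / τ⌋)]
    congr 1
    ext i
    simp only [y, Pi.add_apply, Pi.smul_apply, smul_eq_mul]
    rw [← mul_add, Int.fract_add_floor]
    field_simp
  have hy : ‖y‖ ≤ τ := by
    refine (pi_norm_le_iff_of_nonneg hτ.le).2 fun i => ?_
    simp only [y, norm_mul, Real.norm_of_nonneg hτ.le, Real.norm_of_nonneg (Int.fract_nonneg _)]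
    nlinarith [Int.fract_lt_one (x i / τ)]
  rw [hxy, ← Real.norm_eq_abs]
  refine (convex_univ.norm_image_sub_le_of_norm_fderiv_le
    (fun z _ => hg.differentiable (by simp) z)
    (fun z _ => hK z) (Set.mem_univ 0) (Set.mem_univ y)).trans ?_
  rw [sub_zero, mul_comm]
  gcongr

/-- discrete average -/
noncomputable def ombAvg {d : ℕ} (σ : ℕ) [NeZero σ] (a : Vec d → ℝ) (x : Vec d) : ℝ :=
  ((Fintype.card (Fin d → ZMod σ) : ℝ)⁻¹) *
    ∑ j : Fin d → ZMod σ, a (x + (σ : ℝ)⁻¹ • (fun i => ((j i).val : ℝ)))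

lemma ombAvg_per {d : ℕ} (σ : ℕ) [NeZero σ] (a : Vec d → ℝ) (ha : ZPer a) :
    OmbPer ((σ : ℝ)⁻¹) (ombAvg σ a) := by
  intro x k
  unfold ombAvg
  congr 1
  refine Fintype.sum_equiv (Equiv.addRight (fun i => (k i : ZMod σ))) _ _ fun j => ?_
  have hσ : (σ : ℝ) ≠ 0 := by exact_mod_cast NeZero.ne σ
  have : ∀ i, ∃ m : ℤ, (((j i + (k i : ZMod σ)).val : ℤ)) + σ * m = (j i).val + k i := by
    intro i
    have : (((j i + (k i : ZMod σ)).val : ℤ) : ZMod σ) = (((j i).val + k i : ℤ) : ZMod σ) := by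
      simp
    obtain ⟨m, hm⟩ := (ZMod.intCast_eq_intCast_iff_dvd_sub _ _ _).1 this
    exact ⟨m, by linarith⟩
  choose m hm using this
  rw [← ha (x + (σ : ℝ)⁻¹ • (fun i =>
    (((Equiv.addRight (fun i => (k i : ZMod σ))) j i).val : ℝ))) m]
  congr 1
  ext i
  have := hm i
  have h2 : (((j i + (k i : ZMod σ)).val : ℝ)) + σ * m i = (j i).val + k i := by exact_mod_cast this
  simp only [Pi.add_apply, Pi.smul_apply, smul_eq_mul, Equiv.coe_addRight]
  field_simp
  linarith

lemma ombAvg_contDiff {d : ℕ} (σ : ℕ) [NeZero σ] (a : Vec d → ℝ) (ha : ContDiff ℝ (⊤ : ℕ∞) a) :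
    ContDiff ℝ (⊤ : ℕ∞) (ombAvg σ a) := by
  unfold ombAvg
  fun_prop

lemma omb_iter_aux {d : ℕ} {ι : Type} [Fintype ι] [Nonempty ι] (v : ι → Vec d) (a : Vec d → ℝ)
    (ha : ContDiff ℝ (⊤ : ℕ∞) a)
    (n : ℕ) {S : ℝ} (hS : ∀ x, ‖iteratedFDeriv ℝ n a x‖ ≤ S) (x : Vec d) :
    ‖iteratedFDeriv ℝ n (fun x => (Fintype.card ι : ℝ)⁻¹ • ∑ j, a (x + v j)) x‖ ≤ S := by
  have han : ContDiff ℝ n a := ha.of_le (by exact_mod_cast le_top)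
  have hj : ∀ j : ι, ContDiff ℝ n (fun x => a (x + v j)) := by
    intro j; fun_prop
  have hc : (0:ℝ) < Fintype.card ι := by exact_mod_cast Fintype.card_pos
  have hsum : ContDiff ℝ n (fun x => ∑ j, a (x + v j)) := ContDiff.sum fun j _ => hj j
  rw [iteratedFDeriv_const_smul_apply' hsum.contDiffAt,
    iteratedFDeriv_fun_sum_apply (fun j _ => (hj j).contDiffAt), norm_smul, norm_inv,
    Real.norm_of_nonneg hc.le, inv_mul_le_iff₀ hc]
  refine (norm_sum_le _ _).trans ?_
  refine (Finset.sum_le_sum (g := fun _ => S) fun j _ => ?_).trans ?_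
  · rw [iteratedFDeriv_comp_add_right]
    exact hS _
  · simp

lemma ombAvg_iter {d : ℕ} (σ : ℕ) [NeZero σ] (a : Vec d → ℝ) (ha : ContDiff ℝ (⊤ : ℕ∞) a)
    (n : ℕ) {S : ℝ} (hS : ∀ x, ‖iteratedFDeriv ℝ n a x‖ ≤ S) (x : Vec d) :
    ‖iteratedFDeriv ℝ n (ombAvg σ a) x‖ ≤ S :=
  omb_iter_aux (fun j : Fin d → ZMod σ => (σ : ℝ)⁻¹ • (fun i => ((j i).val : ℝ))) a ha n hS x

lemma omb_sup {d : ℕ} (a : Vec d → ℝ) (ha : ContDiff ℝ (⊤ : ℕ∞) a) (hp : ZPer a) (n : ℕ)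
    (x : Vec d) : ‖iteratedFDeriv ℝ n a x‖ ≤ CkN n a := by
  have hc : Continuous (fun x => ‖iteratedFDeriv ℝ n a x‖) :=
    (ha.continuous_iteratedFDeriv (by exact_mod_cast le_top)).norm
  have hper : iteratedFDeriv ℝ n a x = iteratedFDeriv ℝ n a (fun i => Int.fract (x i)) := by
    have h1 : (fun z => a (z + fun i => ((⌊x i⌋ : ℤ) : ℝ))) = a := by
      ext z; exact hp z _
    have h2 := iteratedFDeriv_comp_add_right (𝕜 := ℝ) (f := a) n (fun i => ((⌊x i⌋ : ℤ) : ℝ))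
      (fun i => Int.fract (x i))
    rw [h1] at h2
    rw [h2]
    congr 1
    ext i
    simp
  have hmem : (fun i => Int.fract (x i)) ∈ fundCube d :=
    ⟨fun i => Int.fract_nonneg _, fun i => (Int.fract_lt_one _).le⟩
  have hb : BddAbove ((fun x => ‖iteratedFDeriv ℝ n a x‖) '' fundCube d) :=
    (isCompact_Icc.image hc).bddAbove
  have h1 : ‖iteratedFDeriv ℝ n a x‖ ≤ sSup ((fun x => ‖iteratedFDeriv ℝ n a x‖) '' fundCube d) := by
    rw [hper]
    exact le_csSup hb ⟨_, hmem, rfl⟩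
  refine h1.trans ?_
  unfold CkN
  refine Finset.single_le_sum (f := fun i => sSup ((fun x => ‖iteratedFDeriv ℝ i a x‖) '' fundCube d)) (fun i _ => ?_)
    (Finset.mem_range.2 n.lt_succ_self)
  refine Real.sSup_nonneg ?_
  rintro _ ⟨y, _, rfl⟩
  exact norm_nonneg _

lemma omb_avg_bound {d : ℕ} (hd : 1 ≤ d) (n σ : ℕ) [NeZero σ] (a : Vec d → ℝ)
    (ha : ContDiff ℝ (⊤ : ℕ∞) a) (hp : ZPer a) (x : Vec d) :
    |ombAvg σ a x - ombAvg σ a 0| ≤ 2 * (d : ℝ) ^ n * ((σ : ℝ)⁻¹) ^ n * CkN n a := by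
  have hσ : (0:ℝ) < (σ : ℝ)⁻¹ := by
    have := NeZero.pos σ
    positivity
  have hd' : (1:ℝ) ≤ d := by exact_mod_cast hd
  have hb := ombAvg_iter σ a ha n (omb_sup a ha hp n)
  have hC : 0 ≤ CkN n a := (norm_nonneg _).trans (hb 0)
  cases n with
  | zero =>
    have h1 := hb x
    have h2 := hb 0
    rw [norm_iteratedFDeriv_zero, Real.norm_eq_abs] at h1 h2
    have := abs_sub (ombAvg σ a x) (ombAvg σ a 0)
    simp only [pow_zero, mul_one]
    linarith
  | succ m =>
    have hper := ombAvg_per σ a hp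
    have hcd := ombAvg_contDiff σ a ha
    refine (omb_osc hσ hcd hper (omb_fderiv_iter hσ m hcd hper hb) x).trans ?_
    have : (σ : ℝ)⁻¹ * ((d * (σ : ℝ)⁻¹) ^ m * CkN (m+1) a)
      = (d : ℝ)^m * (((σ : ℝ)⁻¹)^(m+1) * CkN (m+1) a) := by ring
    rw [this, mul_assoc]
    refine mul_le_mul_of_nonneg_right ?_ (by positivity)
    have : (d:ℝ)^m ≤ d^(m+1) := pow_le_pow_right₀ hd' (by omega)
    have : 0 ≤ (d:ℝ)^m := by positivity
    linarith

lemma omb_int {d : ℕ} {f : Vec d → ℝ} (hf : Continuous f) :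
    Integrable f (volume.restrict (fundCube d)) :=
  hf.continuousOn.integrableOn_compact isCompact_Icc

lemma omb_avg_integral {d : ℕ} (σ : ℕ) [NeZero σ] (a f : Vec d → ℝ)
    (ha : Continuous a) (hp : ZPer a) (hf : Continuous f) (hfp : ZPer f) :
    ∫ x in fundCube d, a x * f ((σ : ℝ) • x) =
      ∫ x in fundCube d, ombAvg σ a x * f ((σ : ℝ) • x) := by
  have hσ : (σ : ℝ) ≠ 0 := by exact_mod_cast NeZero.ne σ
  have hc : (Fintype.card (Fin d → ZMod σ) : ℝ) ≠ 0 := by exact_mod_cast Fintype.card_ne_zero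
  have hper : ZPer (fun x => a x * f ((σ : ℝ) • x)) := by
    intro x k
    have h2 := hfp ((σ : ℝ) • x) (fun i => (σ : ℤ) * k i)
    have e : ((σ : ℝ) • x + fun i => (((σ : ℤ) * k i : ℤ) : ℝ)) =
      (σ : ℝ) • (x + fun i => (k i : ℝ)) := by
      ext i; simp [mul_add]
    simp only []
    rw [hp x k, ← h2, e]
  have hj : ∀ j : Fin d → ZMod σ,
      ∫ x in fundCube d, a (x + (σ : ℝ)⁻¹ • (fun i => ((j i).val : ℝ))) * f ((σ : ℝ) • x)
        = ∫ x in fundCube d, a x * f ((σ : ℝ) • x) := by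
    intro j
    rw [← omb_integral (fun x => a x * f ((σ : ℝ) • x)) (by fun_prop) hper 1 one_pos
      ((σ : ℝ)⁻¹ • (fun i => ((j i).val : ℝ)))]
    congr 1
    ext x
    simp only [Nat.cast_one, one_smul, smul_add, smul_inv_smul₀ hσ]
    have := hfp ((σ : ℝ) • x) (fun i => ((j i).val : ℤ))
    simp only [Int.cast_natCast] at this
    rw [this]
  have e : ∀ x, ombAvg σ a x * f ((σ : ℝ) • x) = ((Fintype.card (Fin d → ZMod σ) : ℝ)⁻¹) *
      ∑ j : Fin d → ZMod σ, a (x + (σ : ℝ)⁻¹ • (fun i => ((j i).val : ℝ))) * f ((σ : ℝ) • x) := by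
    intro x
    rw [ombAvg, mul_assoc, Finset.sum_mul]
  simp_rw [e]
  rw [integral_const_mul, integral_finsetSum _ (fun j _ => omb_int (by fun_prop))]
  simp_rw [hj]
  rw [Finset.sum_const, nsmul_eq_mul, Finset.card_univ, inv_mul_cancel_left₀ hc]

lemma omb_L1L2 {d : ℕ} {f : Vec d → ℝ} (hf : Continuous f) :
    ∫ x in fundCube d, |f x| ≤ (spLp 2 f).toReal := by
  have hprob : IsProbabilityMeasure (volume.restrict (fundCube d) : Measure (Vec d)) := by
    constructor
    rw [Measure.restrict_apply_univ, fundCube, Real.volume_Icc_pi]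
    simp
  have hm : AEStronglyMeasurable f (volume.restrict (fundCube d)) := hf.aestronglyMeasurable
  have e2 : spLp 2 f = eLpNorm f 2 (volume.restrict (fundCube d)) := by
    rw [spLp, eLpGen, if_neg (by simp), eLpNorm_eq_lintegral_rpow_enorm_toReal (by simp) (by simp)]
    rfl
  have hlt : spLp 2 f < ⊤ := by
    rw [e2]
    obtain ⟨C, hC⟩ := (isCompact_Icc (a := (0 : Vec d)) (b := 1)).exists_bound_of_continuousOn
      hf.continuousOn
    refine (MemLp.of_bound hm C ?_).2
    exact (ae_restrict_iff' measurableSet_Icc).2 (Filter.Eventually.of_forall hC)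
  have e1 : ∫ x in fundCube d, |f x| = (eLpNorm f 1 (volume.restrict (fundCube d))).toReal := by
    rw [eLpNorm_one_eq_lintegral_enorm]
    exact integral_norm_eq_lintegral_enorm hm
  rw [e1]
  refine ENNReal.toReal_mono hlt.ne ?_
  rw [e2]
  exact eLpNorm_le_eLpNorm_of_exponent_le (by norm_num) hm

/-- **Fast decay of means against oscillations** (Lemma 2.5): for `d ≥ 1` and
even `n ≥ 0` there is `C_n` such that for all `σ ∈ ℕ₊`, smooth periodic `a`, and
smooth periodic zero-mean `f`,
`| ∫_{𝕋^d} a(x) f(σx) dx | ≤ C_n σ^{−n} ‖a‖_{C^n} ‖f‖_{L²}`. -/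
theorem oscillatory_mean_bound (d : ℕ) (hd : 1 ≤ d) (n : ℕ) (hn : Even n) :
    ∃ C : ℝ, 0 < C ∧ ∀ (σ : ℕ), 0 < σ → ∀ (a f : Vec d → ℝ),
      ContDiff ℝ (⊤ : ℕ∞) a → ZPer a →
      ContDiff ℝ (⊤ : ℕ∞) f → ZPer f → (∫ x in fundCube d, f x) = 0 →
      |∫ x in fundCube d, a x * f ((σ : ℝ) • x)|
        ≤ C * (σ : ℝ) ^ (-(n : ℝ)) * CkN n a * (spLp 2 f).toReal := by
  refine ⟨2 * (d : ℝ) ^ n, by positivity, ?_⟩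
  intro σ hσ a f ha hp hf hfp h0
  have : NeZero σ := ⟨hσ.ne'⟩
  have hfc := hf.continuous
  have hac := ha.continuous
  have hbc := (ombAvg_contDiff σ a ha).continuous
  have hpow : (σ : ℝ) ^ (-(n : ℝ)) = ((σ : ℝ)⁻¹) ^ n := by
    rw [Real.rpow_neg (by positivity), Real.rpow_natCast, inv_pow]
  rw [hpow, omb_avg_integral σ a f hac hp hfc hfp]
  set B := 2 * (d : ℝ) ^ n * ((σ : ℝ)⁻¹) ^ n * CkN n a with hB
  have hbd := omb_avg_bound hd n σ a ha hp
  have hB0 : 0 ≤ B := (abs_nonneg _).trans (hbd 0)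
  have hz : ∫ x in fundCube d, f ((σ : ℝ) • x) = 0 := by
    have := omb_integral f hfc hfp σ hσ 0
    simpa [h0] using this
  have habs : ∫ x in fundCube d, |f ((σ : ℝ) • x)| = ∫ x in fundCube d, |f x| := by
    have := omb_integral (fun x => |f x|) hfc.abs (fun x k => by simp only [hfp x k]) σ hσ 0
    simpa using this
  have e : ∫ x in fundCube d, ombAvg σ a x * f ((σ : ℝ) • x) =
      ∫ x in fundCube d, (ombAvg σ a x - ombAvg σ a 0) * f ((σ : ℝ) • x) := by
    simp_rw [sub_mul]
    rw [integral_sub (omb_int (by fun_prop)) (omb_int (by fun_prop)), integral_const_mul, hz]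
    simp
  rw [e]
  calc |∫ x in fundCube d, (ombAvg σ a x - ombAvg σ a 0) * f ((σ : ℝ) • x)|
      ≤ ∫ x in fundCube d, B * |f ((σ : ℝ) • x)| := by
        refine norm_integral_le_of_norm_le (f := fun x => (ombAvg σ a x - ombAvg σ a 0) * f ((σ : ℝ) • x)) (omb_int (by fun_prop)) (Filter.Eventually.of_forall fun x => ?_)
        rw [norm_mul, Real.norm_eq_abs, Real.norm_eq_abs]
        exact mul_le_mul_of_nonneg_right (hbd x) (abs_nonneg _)
    _ = B * ∫ x in fundCube d, |f x| := by rw [integral_const_mul, habs]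
    _ ≤ B * (spLp 2 f).toReal := mul_le_mul_of_nonneg_left (omb_L1L2 hfc) hB0
end

section
/- Let d ≥ 3, p ∈ (1,∞) with p' = p/(p−1), and μ ≥ 8d. Then there exist, for each j ∈ {1,…,d}, smooth zero-mean functions Φ_j^μ ∈ C_0^∞(𝕋^d), smooth zero-mean vector fields W_j^μ ∈ C_0^∞(𝕋^d;ℝ^d), and smooth vector fields Ω_j^μ ∈ C^∞(𝕋^d;ℝ^d) (the Mikado densities, fields, and potentials) such that: (i) for every r ∈ [1,∞] and m ∈ ℕ there are constants C_m, independent of μ, with ‖∇^m Φ_j^μ‖_{L^r} ≤ C_m μ^{m + (d−1)/p − (d−1)/r}, ‖∇^m Ω_j^μ‖_{L^r} ≤ C_m μ^{m − 1 + (d−1)/p − (d−1)/r}, and ‖∇^m W_j^μ‖_{L^r} ≤ C_m μ^{m + (d−1)/p' − (d−1)/r}; (ii) div(Φ_j^μ W_j^μ) = 0, div W_j^μ = 0, and div Ω_j^μ = Φ_j^μ; (iii) ∫_{𝕋^d} Φ_j^μ W_j^μ dx = e_j for all 1 ≤ j ≤ d, and Φ_j^μ W_k^μ ≡ 0 pointwise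 whenever j ≠ k, where e_j is the j-th standard Euclidean basis vector. -/
open MeasureTheory ENNReal

open scoped ContDiff

/-- Smooth functions supported in `[-1/2,1/2]`. -/
def MkGood (h : ℝ → ℝ) : Prop := ContDiff ℝ ∞ h ∧ ∀ t, 1/2 < |t| → h t = 0

/-- Periodised rescaling. -/
noncomputable def mkPer (μ a : ℝ) (h : ℝ → ℝ) (t : ℝ) : ℝ := h (μ * (Int.fract t - a))

lemma MkGood.deriv {h : ℝ → ℝ} (H : MkGood h) : MkGood (deriv h) := by
  refine ⟨(contDiff_infty_iff_deriv.1 H.1).2, fun t ht => ?_⟩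
  have : h =ᶠ[nhds t] fun _ => 0 := by
    filter_upwards [(isOpen_lt continuous_const continuous_abs).mem_nhds ht] with s hs
    exact H.2 s hs
  rw [this.deriv_eq]; simp

lemma MkGood.mul {h g : ℝ → ℝ} (H : MkGood h) (G : MkGood g) : MkGood (fun t => h t * g t) :=
  ⟨H.1.mul G.1, fun t ht => by simp [H.2 t ht]⟩

lemma MkGood.iter {h : ℝ → ℝ} (H : MkGood h) (k : ℕ) : MkGood (iteratedDeriv k h) := by
  induction k with
  | zero => simpa using H
  | succ k ih => rw [iteratedDeriv_succ]; exact ih.deriv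

lemma MkGood.compact {h : ℝ → ℝ} (H : MkGood h) : HasCompactSupport h := by
  refine HasCompactSupport.intro (K := Set.Icc (-1) 1) isCompact_Icc fun x hx => H.2 x ?_
  by_contra hc
  exact hx (abs_le.1 (by linarith))

lemma MkGood.bdd {h : ℝ → ℝ} (H : MkGood h) : ∃ B, ∀ t, |h t| ≤ B := by
  obtain ⟨B, hB⟩ := H.compact.exists_bound_of_continuous H.1.continuous
  exact ⟨B, hB⟩

lemma mkPer_hasDerivAt {μ a : ℝ} (hμ : 0 < μ) (ha : 1 ≤ μ * a) (hb : 1 ≤ μ * (1 - a))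
    {h : ℝ → ℝ} (H : MkGood h) (t : ℝ) :
    HasDerivAt (mkPer μ a h) (μ * mkPer μ a (deriv h) t) t := by
  by_cases hf : Int.fract t = 0
  · have hd : mkPer μ a (deriv h) t = 0 := by
      refine H.deriv.2 _ ?_
      rw [hf, lt_abs]; right; linarith
    rw [hd, mul_zero]
    have : mkPer μ a h =ᶠ[nhds t] fun _ => 0 := by
      have ht : t = ⌊t⌋ := by have := Int.fract_add_floor t; linarith
      have hδ : 0 < 1 / (2 * μ) := by positivity
      have hm : μ * (1 / (2 * μ)) = 1 / 2 := by field_simp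
      have hδ1 : 1 / (2 * μ) < 1 := by
        rw [div_lt_one (by positivity)]; nlinarith
      filter_upwards [Ioo_mem_nhds (show t - 1 / (2 * μ) < t by linarith)
        (show t < t + 1 / (2 * μ) by linarith)] with s hs
      obtain ⟨hs1, hs2⟩ := hs
      refine H.2 _ ?_
      rcases le_or_gt t s with hst | hst
      · have : ⌊s⌋ = ⌊t⌋ := by
          rw [Int.floor_eq_iff]; constructor <;> linarith
        have h2 : Int.fract s = s - t := by rw [Int.fract, this, ← ht]
        have : μ * (s - t) < μ * (1 / (2 * μ)) := by gcongr; linarith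
        rw [h2, lt_abs]; right; nlinarith
      · have : ⌊s⌋ = ⌊t⌋ - 1 := by
          rw [Int.floor_eq_iff]; push_cast; constructor <;> linarith
        have h2 : Int.fract s = s - t + 1 := by rw [Int.fract, this]; push_cast; linarith
        have : μ * (t - s) < μ * (1 / (2 * μ)) := by gcongr; linarith
        rw [h2, lt_abs]; left; nlinarith
    exact (hasDerivAt_const t (0:ℝ)).congr_of_eventuallyEq this
  · have h0 : 0 < Int.fract t := lt_of_le_of_ne (Int.fract_nonneg t) (Ne.symm hf)
    have h1 := Int.fract_lt_one t
    have h2 := Int.fract_add_floor t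
    have : mkPer μ a h =ᶠ[nhds t] fun s => h (μ * (s - ⌊t⌋ - a)) := by
      filter_upwards [Ioo_mem_nhds (show (⌊t⌋ : ℝ) < t by linarith)
        (show t < ⌊t⌋ + 1 by linarith)] with s hs
      have : ⌊s⌋ = ⌊t⌋ := by
          rw [Int.floor_eq_iff]; constructor <;> linarith [hs.1, hs.2]
      simp only [mkPer, Int.fract, this]
    refine HasDerivAt.congr_of_eventuallyEq ?_ this
    have e : HasDerivAt (fun s : ℝ => μ * (s - ⌊t⌋ - a)) μ t := by
      simpa using (((hasDerivAt_id t).sub_const (⌊t⌋ : ℝ)).sub_const a).const_mul μ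
    have g := ((H.1.differentiable (by simp)) (μ * (t - ⌊t⌋ - a))).hasDerivAt
    have := g.comp t e
    rw [mul_comm]
    exact this

lemma mkPer_iter {μ a : ℝ} (hμ : 0 < μ) (ha : 1 ≤ μ * a) (hb : 1 ≤ μ * (1 - a))
    {h : ℝ → ℝ} (H : MkGood h) (k : ℕ) :
    iteratedDeriv k (mkPer μ a h) = fun t => μ ^ k * mkPer μ a (iteratedDeriv k h) t := by
  induction k with
  | zero => simp
  | succ k ih =>
    rw [iteratedDeriv_succ, ih]
    ext t
    rw [((mkPer_hasDerivAt hμ ha hb (H.iter k) t).const_mul (μ ^ k)).deriv, iteratedDeriv_succ]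
    ring

lemma mkPer_contDiff {μ a : ℝ} (hμ : 0 < μ) (ha : 1 ≤ μ * a) (hb : 1 ≤ μ * (1 - a))
    {h : ℝ → ℝ} (H : MkGood h) : ContDiff ℝ ∞ (mkPer μ a h) := by
  refine contDiff_of_differentiable_iteratedDeriv fun m _ => ?_
  rw [mkPer_iter hμ ha hb H]
  exact fun t => ((mkPer_hasDerivAt hμ ha hb (H.iter m) t).const_mul _).differentiableAt

lemma mkPer_integral {μ a : ℝ} (hμ : 0 < μ) (ha : 1 ≤ μ * a) (hb : 1 ≤ μ * (1 - a))
    {h : ℝ → ℝ} (H : MkGood h) :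
    ∫ t in Set.Icc (0:ℝ) 1, mkPer μ a h t = μ⁻¹ * ∫ t, h t := by
  rw [integral_Icc_eq_integral_Ioo]
  have : ∫ t in Set.Ioo (0:ℝ) 1, mkPer μ a h t = ∫ t in Set.Ioo (0:ℝ) 1, h (μ * t - μ * a) := by
    refine setIntegral_congr_fun measurableSet_Ioo fun t ht => ?_
    simp only [mkPer]
    rw [Int.fract_eq_self.2 ⟨ht.1.le, ht.2⟩]; ring_nf
  rw [this, ← integral_Ioc_eq_integral_Ioo, ← intervalIntegral.integral_of_le zero_le_one,
    intervalIntegral.integral_comp_mul_sub _ hμ.ne', smul_eq_mul,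
    intervalIntegral.integral_eq_integral_of_support_subset]
  intro t ht
  by_contra hc
  refine ht (H.2 t ?_)
  rw [lt_abs]
  by_contra h'
  push Not at h'
  exact hc ⟨by linarith, by linarith⟩

lemma mk_exists_bump : ∃ ψ : ℝ → ℝ, MkGood ψ ∧ (∫ t, deriv ψ t = 0) ∧
    0 < ∫ t, deriv ψ t * deriv ψ t := by
  let f : ContDiffBump (0:ℝ) := ⟨1/4, 1/2, by norm_num, by norm_num⟩
  have hG : MkGood f := by
    refine ⟨f.contDiff, fun t ht => f.zero_of_le_dist ?_⟩
    show (1/2:ℝ) ≤ dist t 0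
    simpa using ht.le
  refine ⟨f, hG, ?_, ?_⟩
  · exact integral_of_hasDerivAt_of_tendsto
      (fun t => (hG.1.differentiable (by simp) t).hasDerivAt)
      (hG.deriv.1.continuous.integrable_of_hasCompactSupport hG.deriv.compact)
      (hG.compact.is_zero_at_infty.mono_left atBot_le_cocompact)
      (hG.compact.is_zero_at_infty.mono_left atTop_le_cocompact) |>.trans (sub_self 0)
  · have : ∃ x, deriv f x ≠ 0 := by
      by_contra! hc
      have h1 := is_const_of_deriv_eq_zero (hG.1.differentiable (by simp)) hc 0 1
      have h2 : f 0 = 1 := f.one_of_mem_closedBall (by simp [f.rIn_pos.le])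
      have h3 : f 1 = 0 := hG.2 1 (by norm_num)
      rw [h2, h3] at h1; norm_num at h1
    obtain ⟨x, hx⟩ := this
    exact Continuous.integral_pos_of_hasCompactSupport_nonneg_nonzero (x := x)
      (hG.deriv.mul hG.deriv).1.continuous (hG.deriv.mul hG.deriv).compact
      (fun t => mul_self_nonneg _) (by simpa using hx)

/-- Product profile around the line in direction `j`. -/
noncomputable def mkP {d : ℕ} (μ a : ℝ) (j : Fin d) (h : Fin d → ℝ → ℝ) (x : Vec d) : ℝ :=
  ∏ i ∈ Finset.univ.erase j, mkPer μ a (h i) (x i)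

/-- Leibniz constant. -/
noncomputable def mkK (d : ℕ) (B : ℕ → ℝ) (m : ℕ) : ℝ :=
  ∑ j : Fin d, ∑ q ∈ (Finset.univ.erase j).sym m, ((q : Multiset (Fin d)).countPerms : ℝ) *
    ∏ i ∈ Finset.univ.erase j, B ((q : Multiset (Fin d)).count i)

lemma mk_comp_proj_contDiff {d : ℕ} {g : ℝ → ℝ} (hg : ContDiff ℝ ∞ g) (i : Fin d) :
    ContDiff ℝ ∞ (fun x : Vec d => g (x i)) := hg.comp (contDiff_apply ℝ ℝ i)

lemma mk_comp_proj_norm {d : ℕ} {g : ℝ → ℝ} (hg : ContDiff ℝ ∞ g) (i : Fin d) (k : ℕ)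
    (x : Vec d) : ‖iteratedFDeriv ℝ k (fun x : Vec d => g (x i)) x‖ ≤ ‖iteratedDeriv k g (x i)‖ := by
  have e : (fun x : Vec d => g (x i)) = g ∘ (ContinuousLinearMap.proj (R := ℝ) (φ := fun _ : Fin d => ℝ) i) := rfl
  rw [e, ContinuousLinearMap.iteratedFDeriv_comp_right _ hg _ (by exact_mod_cast le_top)]
  refine (ContinuousMultilinearMap.norm_compContinuousLinearMap_le _ _).trans ?_
  rw [norm_iteratedFDeriv_eq_norm_iteratedDeriv]
  refine mul_le_of_le_one_right (norm_nonneg _) ?_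
  refine Finset.prod_le_one (fun _ _ => norm_nonneg _) fun _ _ => ?_
  refine ContinuousLinearMap.opNorm_le_bound _ zero_le_one fun y => ?_
  simpa using norm_le_pi_norm y i

section
variable {d : ℕ} {μ a : ℝ} (hμ : 0 < μ) (ha : 1 ≤ μ * a) (hb : 1 ≤ μ * (1 - a))
  {h : Fin d → ℝ → ℝ} (H : ∀ i, MkGood (h i))

lemma mkP_contDiff (hμ : 0 < μ) (ha : 1 ≤ μ * a) (hb : 1 ≤ μ * (1 - a))
    (H : ∀ i, MkGood (h i)) (j : Fin d) : ContDiff ℝ ∞ (mkP μ a j h) := by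
  unfold mkP
  exact contDiff_prod fun i _ => mk_comp_proj_contDiff (mkPer_contDiff hμ ha hb (H i)) i

lemma mkP_per (j : Fin d) : ZPer (mkP μ a j h) := by
  intro x k
  simp [mkP, mkPer]

lemma mkP_zero (H : ∀ i, MkGood (h i)) {j i : Fin d} (hij : i ≠ j) {x : Vec d}
    (hx : 1/2 < |μ * (Int.fract (x i) - a)|) : mkP μ a j h x = 0 :=
  Finset.prod_eq_zero (Finset.mem_erase.2 ⟨hij, Finset.mem_univ i⟩) ((H i).2 _ hx)

lemma mkP_bound_aux (hμ : 0 < μ) (ha : 1 ≤ μ * a) (hb : 1 ≤ μ * (1 - a))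
    (H : ∀ i, MkGood (h i)) (j : Fin d) (m : ℕ) (x : Vec d) :
    ‖iteratedFDeriv ℝ m (mkP μ a j h) x‖ ≤
      ∑ q ∈ (Finset.univ.erase j).sym m, ((q : Multiset (Fin d)).countPerms : ℝ) *
        ∏ i ∈ Finset.univ.erase j, (μ ^ ((q : Multiset (Fin d)).count i) *
          |mkPer μ a (iteratedDeriv ((q : Multiset (Fin d)).count i) (h i)) (x i)|) := by
  have := norm_iteratedFDeriv_prod_le (𝕜 := ℝ) (u := Finset.univ.erase j) (N := ∞) (n := m)
    (f := fun i (x : Vec d) => mkPer μ a (h i) (x i)) (x := x)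
    (fun i _ => mk_comp_proj_contDiff (mkPer_contDiff hμ ha hb (H i)) i) (by exact_mod_cast le_top)
  refine this.trans ?_
  gcongr with q hq i hi
  refine (mk_comp_proj_norm (mkPer_contDiff hμ ha hb (H i)) i _ x).trans ?_
  rw [mkPer_iter hμ ha hb (H i), norm_mul, norm_pow, Real.norm_of_nonneg hμ.le, Real.norm_eq_abs]

lemma mkP_iter_zero (hμ : 0 < μ) (ha : 1 ≤ μ * a) (hb : 1 ≤ μ * (1 - a))
    (H : ∀ i, MkGood (h i)) {j i : Fin d} (m : ℕ) (hij : i ≠ j) {x : Vec d}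
    (hx : 1/2 < |μ * (Int.fract (x i) - a)|) : iteratedFDeriv ℝ m (mkP μ a j h) x = 0 := by
  rw [← norm_le_zero_iff]
  refine (mkP_bound_aux hμ ha hb H j m x).trans (le_of_eq ?_)
  refine Finset.sum_eq_zero fun q _ => ?_
  rw [Finset.prod_eq_zero (Finset.mem_erase.2 ⟨hij, Finset.mem_univ i⟩), mul_zero]
  rw [mkPer, ((H i).iter _).2 _ hx]; simp

lemma mkP_bound (hμ : 0 < μ) (ha : 1 ≤ μ * a) (hb : 1 ≤ μ * (1 - a))
    (H : ∀ i, MkGood (h i)) {B : ℕ → ℝ} (hB : ∀ i k t, |iteratedDeriv k (h i) t| ≤ B k)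
    (hB0 : ∀ k, 0 ≤ B k)
    (j : Fin d) (m : ℕ) (x : Vec d) :
    ‖iteratedFDeriv ℝ m (mkP μ a j h) x‖ ≤ mkK d B m * μ ^ m := by
  refine (mkP_bound_aux hμ ha hb H j m x).trans ?_
  have h1 : ∑ q ∈ (Finset.univ.erase j).sym m, ((q : Multiset (Fin d)).countPerms : ℝ) *
        ∏ i ∈ Finset.univ.erase j, (μ ^ ((q : Multiset (Fin d)).count i) *
          |mkPer μ a (iteratedDeriv ((q : Multiset (Fin d)).count i) (h i)) (x i)|) ≤
      ∑ q ∈ (Finset.univ.erase j).sym m, (((q : Multiset (Fin d)).countPerms : ℝ) *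
        ∏ i ∈ Finset.univ.erase j, B ((q : Multiset (Fin d)).count i)) * μ ^ m := by
    refine Finset.sum_le_sum fun q hq => ?_
    have e : ∏ i ∈ Finset.univ.erase j, μ ^ ((q : Multiset (Fin d)).count i) = μ ^ m := by
      rw [Finset.prod_pow_eq_pow_sum]
      congr 1
      rw [Multiset.sum_count_eq_card]
      · exact q.2
      · intro i hi
        exact Finset.mem_sym_iff.1 hq i hi
    rw [Finset.prod_mul_distrib, e, mul_assoc, mul_comm (μ ^ m)]
    gcongr with i hi
    exact hB i _ _
  refine h1.trans ?_
  rw [← Finset.sum_mul]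
  gcongr
  exact Finset.single_le_sum (f := fun j : Fin d => ∑ q ∈ (Finset.univ.erase j).sym m,
    ((q : Multiset (Fin d)).countPerms : ℝ) *
    ∏ i ∈ Finset.univ.erase j, B ((q : Multiset (Fin d)).count i))
    (fun j _ => Finset.sum_nonneg fun q _ => mul_nonneg (Nat.cast_nonneg _)
      (Finset.prod_nonneg fun i _ => hB0 _)) (Finset.mem_univ j)

end

lemma mkK_nonneg (d : ℕ) {B : ℕ → ℝ} (hB0 : ∀ k, 0 ≤ B k) (m : ℕ) : 0 ≤ mkK d B m :=
  Finset.sum_nonneg fun j _ => Finset.sum_nonneg fun q _ => mul_nonneg (Nat.cast_nonneg _)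
      (Finset.prod_nonneg fun i _ => hB0 _)

lemma mk_spLp {d : ℕ} {E : Type*} [NormedAddCommGroup E] {μ a : ℝ} (hμ : 0 < μ)
    (ha : 1 ≤ μ * a) (hd : 1 ≤ d)
    (j : Fin d) (f : Vec d → E) {K : ℝ} (hK : 0 ≤ K) (hf : ∀ x, ‖f x‖ ≤ K)
    (hf0 : ∀ x i, i ≠ j → 1/2 < |μ * (Int.fract (x i) - a)| → f x = 0)
    (r : ℝ≥0∞) (hr : 1 ≤ r) :
    spLp r f ≤ ENNReal.ofReal (K * μ ^ (-(((d:ℝ) - 1) * (1 / r).toReal))) := by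
  have hfe : ∀ x, (‖f x‖₊ : ℝ≥0∞) ≤ ENNReal.ofReal K := fun x => by
    rw [← enorm_eq_nnnorm, ← ofReal_norm]
    exact ENNReal.ofReal_le_ofReal (hf x)
  unfold spLp eLpGen
  split_ifs with hi
  · subst hi
    simp only [ENNReal.div_top, ENNReal.toReal_zero, mul_zero, neg_zero, Real.rpow_zero, mul_one]
    exact essSup_le_of_ae_le _ (Filter.Eventually.of_forall hfe)
  · set s := r.toReal with hs
    have hs1 : 1 ≤ s := by
      rw [hs, ← ENNReal.toReal_one]; exact ENNReal.toReal_mono hi hr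
    have hs0 : 0 < s := by linarith
    let T : Set (Vec d) := Set.univ.pi fun i =>
      if i = j then Set.Icc 0 1 else Set.Icc (a - 1/(2*μ)) (a + 1/(2*μ))
    have hTm : MeasurableSet T := MeasurableSet.univ_pi fun i => by
      split_ifs <;> exact measurableSet_Icc
    have hTv : volume T = ENNReal.ofReal (μ ^ (-((d:ℝ) - 1))) := by
      rw [volume_pi_pi, ← Finset.mul_prod_erase _ _ (Finset.mem_univ j)]
      rw [Finset.prod_congr rfl (g := fun _ => ENNReal.ofReal (μ⁻¹))]
      · simp only [if_true, Real.volume_Icc, Finset.prod_const]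
        rw [Finset.card_erase_of_mem (Finset.mem_univ j), Finset.card_univ, Fintype.card_fin,
          ← ENNReal.ofReal_pow (by positivity), Real.rpow_neg hμ.le]
        have : (d:ℝ) - 1 = ((d - 1 : ℕ) : ℝ) := by push_cast [hd]; rfl
        rw [this, Real.rpow_natCast, inv_pow]; simp
      · intro i hi
        rw [if_neg (Finset.ne_of_mem_erase hi), Real.volume_Icc]
        congr 1; field_simp; ring
    have hT : ∀ x ∈ fundCube d, x ∉ T → f x = 0 := by
      intro x hx hxT
      simp only [T, Set.mem_pi, Set.mem_univ, true_implies, not_forall] at hxT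
      obtain ⟨i, hi⟩ := hxT
      have hx0 := hx.1 i
      have hx1 := hx.2 i
      simp only [Pi.zero_apply, Pi.one_apply] at hx0 hx1
      split_ifs at hi with hij
      · exact absurd ⟨hx0, hx1⟩ hi
      · refine hf0 x i hij ?_
        rcases hx1.lt_or_eq with h1 | h1
        · rw [Int.fract_eq_self.2 ⟨hx0, h1⟩]
          by_contra hc
          push Not at hc
          rw [abs_le] at hc
          refine hi ⟨?_, ?_⟩
          · have : μ * (a - 1/(2*μ)) ≤ μ * x i := by
              have : μ * (1/(2*μ)) = 1/2 := by field_simp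
              nlinarith [hc.1]
            exact le_of_mul_le_mul_left this hμ
          · have : μ * x i ≤ μ * (a + 1/(2*μ)) := by
              have : μ * (1/(2*μ)) = 1/2 := by field_simp
              nlinarith [hc.2]
            exact le_of_mul_le_mul_left this hμ
        · rw [h1, Int.fract_one, lt_abs]; right; linarith
    have hint : ∫⁻ x in fundCube d, (‖f x‖₊ : ℝ≥0∞) ^ s ≤ ENNReal.ofReal K ^ s * volume T := by
      calc ∫⁻ x in fundCube d, (‖f x‖₊ : ℝ≥0∞) ^ s
          ≤ ∫⁻ x in fundCube d, T.indicator (fun _ => ENNReal.ofReal K ^ s) x := by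
            refine setLIntegral_mono' measurableSet_Icc fun x hx => ?_
            by_cases hxT : x ∈ T
            · rw [Set.indicator_of_mem hxT]
              exact ENNReal.rpow_le_rpow (hfe x) hs0.le
            · rw [hT x hx hxT]; simp [hs0]
        _ ≤ ∫⁻ x, T.indicator (fun _ => ENNReal.ofReal K ^ s) x := setLIntegral_le_lintegral _ _
        _ = _ := by rw [lintegral_indicator hTm, setLIntegral_const]
    refine (ENNReal.rpow_le_rpow hint (by positivity)).trans (le_of_eq ?_)
    rw [ENNReal.mul_rpow_of_nonneg _ _ (by positivity), ← ENNReal.rpow_mul,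
      mul_one_div_cancel hs0.ne', ENNReal.rpow_one, hTv,
      ENNReal.ofReal_rpow_of_nonneg (by positivity) (by positivity), ← Real.rpow_mul hμ.le,
      ENNReal.ofReal_mul hK]
    congr 3
    rw [ENNReal.toReal_div, ENNReal.toReal_one]; ring

lemma mk_fderiv_coord {d : ℕ} {f : Vec d → ℝ} (hf : Differentiable ℝ f) (x : Vec d) (i : Fin d)
    {f' : ℝ} (h : HasDerivAt (fun s => f (Function.update x i s)) f' (x i)) :
    fderiv ℝ f x (Pi.single i 1) = f' := by
  have h1 : HasFDerivAt f (fderiv ℝ f x) (Function.update x i (x i)) := by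
    rw [Function.update_eq_self]; exact (hf x).hasFDerivAt
  exact (h1.comp_hasDerivAt (x i) (hasDerivAt_update x i (x i))).unique h

lemma mkP_update {d : ℕ} (μ a : ℝ) (j : Fin d) (h : Fin d → ℝ → ℝ) (x : Vec d) (s : ℝ) :
    mkP μ a j h (Function.update x j s) = mkP μ a j h x := by
  refine Finset.prod_congr rfl fun i hi => ?_
  rw [Function.update_of_ne (Finset.ne_of_mem_erase hi)]

lemma mk_div_single {d : ℕ} (f : Vec d → ℝ) (i : Fin d) (x : Vec d) :
    divV (fun y => f y • (Pi.single i (1:ℝ) : Vec d)) x = fderiv ℝ f x (Pi.single i 1) := by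
  unfold divV
  rw [Finset.sum_eq_single i]
  · simp
  · intro k _ hk
    simp [hk]
  · simp

lemma mk_integral {d : ℕ} {μ a : ℝ} (hμ : 0 < μ) (ha : 1 ≤ μ * a) (hb : 1 ≤ μ * (1 - a))
    {g : ℝ → ℝ} (H : MkGood g) (j : Fin d) :
    ∫ x in fundCube d, mkP μ a j (fun _ => g) x = (μ⁻¹ * ∫ t, g t) ^ (d - 1) := by
  have e : fundCube d = Set.univ.pi fun _ => Set.Icc (0:ℝ) 1 := by
    rw [Set.pi_univ_Icc]; rfl
  have e2 : ∀ x : Vec d, mkP μ a j (fun _ => g) x =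
      ∏ i, (fun i t => if i = j then (1:ℝ) else mkPer μ a g t) i (x i) := by
    intro x
    rw [← Finset.mul_prod_erase _ _ (Finset.mem_univ j)]
    simp only [if_true, one_mul]
    exact Finset.prod_congr rfl fun i hi => by rw [if_neg (Finset.ne_of_mem_erase hi)]
  simp_rw [e2]
  rw [e, volume_pi, Measure.restrict_pi_pi, integral_fintype_prod_eq_prod
    (fun i t => if i = j then (1:ℝ) else mkPer μ a g t),
    ← Finset.mul_prod_erase _ _ (Finset.mem_univ j)]
  rw [Finset.prod_congr rfl (g := fun _ => μ⁻¹ * ∫ t, g t)]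
  · simp
  · intro i hi
    simp only [if_neg (Finset.ne_of_mem_erase hi)]
    exact mkPer_integral hμ ha hb H

/-- **Mikado flows** (Proposition 2.5 / [CL21, Prop. 4.3, Thm. 4.4]): for `d ≥ 3`,
`p ∈ (1,∞)` with conjugate `p'`, there are constants `C m r` (independent of `μ`)
such that for every `μ ≥ 8d` there exist Mikado densities `Φ_j^μ`, Mikado fields
`W_j^μ` (smooth, periodic, zero mean) and potentials `Ω_j^μ` satisfying the
`L^r` estimates (i), the equations (ii) `div(Φ_j W_j) = 0`, `div W_j = 0`,
`div Ω_j = Φ_j`, and the normalization/disjointness (iii)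
`∫ Φ_j W_j = e_j` and `Φ_j W_k ≡ 0` for `j ≠ k`. -/
theorem mikado_flows (d : ℕ) (hd : 3 ≤ d)
    (p : ℝ) (hp : 1 < p) (p' : ℝ) (hp' : p' = p / (p - 1)) :
    ∃ C : ℕ → ℝ≥0∞ → ℝ, (∀ m r, 0 < C m r) ∧
      ∀ μ : ℝ, 8 * (d : ℝ) ≤ μ →
        ∃ (Φ : Fin d → Vec d → ℝ) (W Ω : Fin d → Vec d → Vec d),
          (∀ j, ContDiff ℝ (⊤ : ℕ∞) (Φ j) ∧ ZPer (Φ j) ∧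
            (∫ x in fundCube d, Φ j x) = 0) ∧
          (∀ j, ContDiff ℝ (⊤ : ℕ∞) (W j) ∧ ZPer (W j) ∧
            (∫ x in fundCube d, W j x) = 0) ∧
          (∀ j, ContDiff ℝ (⊤ : ℕ∞) (Ω j) ∧ ZPer (Ω j)) ∧
          -- (i) L^r estimates, constants independent of μ
          (∀ (m : ℕ) (r : ℝ≥0∞), 1 ≤ r → ∀ j,
            spLp r (iteratedFDeriv ℝ m (Φ j))
              ≤ ENNReal.ofReal (C m r *
                  μ ^ ((m : ℝ) + (d - 1) / p - (d - 1) * (1 / r).toReal)) ∧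
            spLp r (iteratedFDeriv ℝ m (Ω j))
              ≤ ENNReal.ofReal (C m r *
                  μ ^ ((m : ℝ) - 1 + (d - 1) / p - (d - 1) * (1 / r).toReal)) ∧
            spLp r (iteratedFDeriv ℝ m (W j))
              ≤ ENNReal.ofReal (C m r *
                  μ ^ ((m : ℝ) + (d - 1) / p' - (d - 1) * (1 / r).toReal))) ∧
          -- (ii) equations
          (∀ j x, divV (fun y => Φ j y • W j y) x = 0) ∧
          (∀ j x, divV (W j) x = 0) ∧
          (∀ j x, divV (Ω j) x = Φ j x) ∧
          -- (iii) normalization and disjointness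
          (∀ j, (∫ x in fundCube d, Φ j x • W j x) = Pi.single j 1) ∧
          (∀ j k, j ≠ k → ∀ x, Φ j x • W k x = 0) := by
  classical
  obtain ⟨ψ, hψ, hψ0, hK⟩ := mk_exists_bump
  set K := ∫ t, deriv ψ t * deriv ψ t with hKdef
  have hb1 : ∀ k, ∃ B, ∀ t, |iteratedDeriv k ψ t| ≤ B := fun k => (hψ.iter k).bdd
  have hb2 : ∀ k, ∃ B, ∀ t, |iteratedDeriv k (deriv ψ) t| ≤ B := fun k => (hψ.deriv.iter k).bdd
  choose B1 hB1 using hb1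
  choose B2 hB2 using hb2
  let B : ℕ → ℝ := fun k => max (B1 k) (B2 k)
  have hB1' : ∀ k t, |iteratedDeriv k ψ t| ≤ B k := fun k t => (hB1 k t).trans (le_max_left _ _)
  have hB2' : ∀ k t, |iteratedDeriv k (deriv ψ) t| ≤ B k :=
    fun k t => (hB2 k t).trans (le_max_right _ _)
  have hB0 : ∀ k, 0 ≤ B k := fun k => (abs_nonneg _).trans (hB1' k 0)
  set A : ℝ := (K ^ (d - 1))⁻¹ with hA
  have hA0 : 0 < A := by positivity
  have hd1 : 1 ≤ d := by omega
  have hd0 : (0:ℝ) < d := by exact_mod_cast hd1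
  have hi0 : ∀ j : Fin d, ∃ i : Fin d, i ≠ j := fun j => by
    have : Nontrivial (Fin d) := Fin.nontrivial_iff_two_le.2 (by omega)
    exact exists_ne j
  choose i0 hi0 using hi0
  refine ⟨fun m _ => (A + 1) * mkK d B m + 1, fun m _ => by
    have := mkK_nonneg d hB0 m; positivity, fun μ hμ8 => ?_⟩
  have hμ : 0 < μ := by linarith
  let a : Fin d → ℝ := fun j => ((j:ℝ) + 1/2) / d
  have hμd : 8 ≤ μ / d := by rwa [le_div_iff₀ hd0]
  have ha : ∀ j, 1 ≤ μ * a j := fun j => by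
    have : μ * a j = (μ / d) * ((j:ℝ) + 1/2) := by simp only [a]; ring
    rw [this]
    have hj : (0:ℝ) ≤ (j:ℝ) := Nat.cast_nonneg _
    nlinarith
  have hb : ∀ j, 1 ≤ μ * (1 - a j) := fun j => by
    have : μ * (1 - a j) = (μ / d) * (d - j - 1/2) := by simp only [a]; field_simp; ring
    rw [this]
    have hj : (j:ℝ) + 1 ≤ d := by exact_mod_cast j.2
    nlinarith
  let h1 : Fin d → ℝ → ℝ := fun _ => deriv ψ
  let h2 : Fin d → Fin d → ℝ → ℝ := fun j => Function.update h1 (i0 j) ψ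
  have H1 : ∀ i, MkGood (h1 i) := fun _ => hψ.deriv
  have H2 : ∀ j i, MkGood (h2 j i) := fun j i => by
    by_cases hi : i = i0 j
    · subst hi; simpa [h2] using hψ
    · simpa [h2, hi] using H1 i
  have hBh2 : ∀ j i k t, |iteratedDeriv k (h2 j i) t| ≤ B k := fun j i k t => by
    by_cases hi : i = i0 j
    · subst hi; simpa [h2] using hB1' k t
    · simpa [h2, hi] using hB2' k t
  have cP := fun j => mkP_contDiff hμ (ha j) (hb j) H1 j
  have cQ := fun j => mkP_contDiff hμ (ha j) (hb j) (H2 j) j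
  have dP := fun j => (cP j).differentiable (by simp)
  have dQ := fun j => (cQ j).differentiable (by simp)
  let cΦ : ℝ := A * μ ^ (((d:ℝ) - 1) / p)
  let cΩ : ℝ := A * μ ^ (((d:ℝ) - 1) / p - 1)
  let cW : ℝ := μ ^ (((d:ℝ) - 1) / p')
  have hcΩ : cΩ * μ = cΦ := by
    simp only [cΩ, cΦ]
    rw [Real.rpow_sub_one hμ.ne']; field_simp
  have hint0 : ∀ j, ∫ x in fundCube d, mkP μ (a j) j h1 x = 0 := fun j => by
    rw [mk_integral hμ (ha j) (hb j) hψ.deriv, hψ0, mul_zero, zero_pow (by omega)]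
  have hcW : cΦ * cW = A * μ ^ (d - 1) := by
    have e : ((d:ℝ) - 1) / p + ((d:ℝ) - 1) / p' = ((d - 1 : ℕ) : ℝ) := by
      have : p - 1 ≠ 0 := by linarith
      have : p ≠ 0 := by linarith
      rw [hp']; push_cast [hd1]; field_simp; ring
    simp only [cΦ, cW]
    rw [mul_assoc, ← Real.rpow_add hμ, e, Real.rpow_natCast]
  have hmul : ∀ j x, (cΦ * mkP μ (a j) j h1 x) • (cW * mkP μ (a j) j h1 x) • (Pi.single j 1 : Vec d)
      = (cΦ * cW * mkP μ (a j) j (fun _ t => deriv ψ t * deriv ψ t) x) •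
        (Pi.single j 1 : Vec d) := fun j x => by
    have : mkP μ (a j) j (fun _ t => deriv ψ t * deriv ψ t) x =
        mkP μ (a j) j h1 x * mkP μ (a j) j h1 x := by
      simp only [mkP, mkPer, h1, ← Finset.prod_mul_distrib]
    rw [this, smul_smul]; congr 1; ring
  have hest : ∀ (j : Fin d) (c A' e : ℝ) (h : Fin d → ℝ → ℝ) {F : Type} [NormedAddCommGroup F]
      [NormedSpace ℝ F] (L : ℝ →L[ℝ] F), (∀ i, MkGood (h i)) →
      (∀ i k t, |iteratedDeriv k (h i) t| ≤ B k) → ‖L‖ ≤ A' * μ ^ e → 0 ≤ A' → A' ≤ A + 1 →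
      ∀ (m : ℕ) (r : ℝ≥0∞), 1 ≤ r → spLp r (iteratedFDeriv ℝ m (L ∘ mkP μ (a j) j h)) ≤
        ENNReal.ofReal (((A + 1) * mkK d B m + 1) *
          μ ^ ((m:ℝ) + e - ((d:ℝ) - 1) * (1 / r).toReal)) := by
    intro j c A' e h F _ _ L H hB hL hA' hA1 m r hr
    have c1 := mkP_contDiff hμ (ha j) (hb j) H j
    have n1 : ∀ x, ‖iteratedFDeriv ℝ m (L ∘ mkP μ (a j) j h) x‖ ≤
        ‖L‖ * ‖iteratedFDeriv ℝ m (mkP μ (a j) j h) x‖ := fun x =>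
      L.norm_iteratedFDeriv_comp_left c1.contDiffAt (by exact_mod_cast le_top)
    have hk := mkK_nonneg d hB0 m
    refine (mk_spLp hμ (ha j) hd1 j _ (K := A' * μ ^ e * (mkK d B m * μ ^ m)) (by positivity)
      ?_ ?_ r hr).trans ?_
    · intro x
      refine (n1 x).trans ?_
      gcongr
      exact mkP_bound hμ (ha j) (hb j) H hB hB0 j m x
    · intro x i hij hx
      rw [← norm_le_zero_iff]
      refine (n1 x).trans ?_
      rw [mkP_iter_zero hμ (ha j) (hb j) H m hij hx]; simp
    · refine ENNReal.ofReal_le_ofReal ?_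
      rw [sub_eq_add_neg ((m:ℝ) + e), Real.rpow_add hμ, Real.rpow_add hμ, Real.rpow_natCast]
      have : A' * μ ^ e * (mkK d B m * μ ^ m) * μ ^ (-(((d:ℝ) - 1) * (1 / r).toReal)) =
        (A' * mkK d B m) * (μ ^ m * μ ^ e * μ ^ (-(((d:ℝ) - 1) * (1 / r).toReal))) := by ring
      rw [this]
      gcongr
      nlinarith
  have hsing : ∀ i : Fin d, ‖(Pi.single i 1 : Vec d)‖ = 1 := fun i => by
    rw [Pi.norm_single]; simp
  have hLn : ∀ (c : ℝ) (i : Fin d), 0 ≤ c →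
      ‖c • ContinuousLinearMap.toSpanSingleton ℝ (Pi.single i 1 : Vec d)‖ ≤ c := fun c i hc => by
    rw [norm_smul, ContinuousLinearMap.norm_toSpanSingleton, hsing, mul_one,
      Real.norm_of_nonneg hc]
  refine ⟨fun j x => cΦ * mkP μ (a j) j h1 x,
    fun j x => (cW * mkP μ (a j) j h1 x) • (Pi.single j 1 : Vec d),
    fun j x => (cΩ * mkP μ (a j) j (h2 j) x) • (Pi.single (i0 j) 1 : Vec d),
    fun j => ⟨contDiff_const.mul (cP j), fun x k => ?_, ?_⟩,
    fun j => ⟨(contDiff_const.mul (cP j)).smul contDiff_const, fun x k => ?_, ?_⟩,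
    fun j => ⟨(contDiff_const.mul (cQ j)).smul contDiff_const, fun x k => ?_⟩,
    fun m r hr j => ⟨?_, ?_, ?_⟩, fun j x => ?_, fun j x => ?_, fun j x => ?_, fun j => ?_,
    fun j k hjk x => ?_⟩
  · simp only [mkP_per j x k]
  · rw [integral_const_mul, hint0, mul_zero]
  · simp only [mkP_per j x k]
  · rw [integral_smul_const, integral_const_mul, hint0, mul_zero, zero_smul]
  · simp only [mkP_per j x k]
  · have := hest j 1 A (((d:ℝ) - 1) / p) h1 (cΦ • ContinuousLinearMap.id ℝ ℝ) H1
      (fun i k t => hB2' k t) (by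
        rw [norm_smul, ContinuousLinearMap.norm_id, mul_one, Real.norm_of_nonneg]; positivity)
      hA0.le (by linarith) m r hr
    exact this
  · have := hest j 1 A (((d:ℝ) - 1) / p - 1) (h2 j)
      (cΩ • ContinuousLinearMap.toSpanSingleton ℝ (Pi.single (i0 j) 1 : Vec d)) (H2 j)
      (hBh2 j) (hLn _ _ (by positivity))
      hA0.le (by linarith) m r hr
    have e : (m:ℝ) - 1 + ((d:ℝ) - 1) / p = m + (((d:ℝ) - 1) / p - 1) := by ring
    rw [e]
    convert! this using 3
    ext x : 1
    simp [smul_smul]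
  · have := hest j 1 1 (((d:ℝ) - 1) / p') h1
      (cW • ContinuousLinearMap.toSpanSingleton ℝ (Pi.single j 1 : Vec d)) H1
      (fun i k t => hB2' k t) (by rw [one_mul]; exact hLn _ _ (by positivity))
      zero_le_one (by linarith) m r hr
    convert! this using 3
    ext x : 1
    simp [smul_smul]
  · simp only [hmul]
    rw [mk_div_single]
    refine mk_fderiv_coord (Differentiable.const_mul ((mkP_contDiff hμ (ha j) (hb j)
      (fun _ => hψ.deriv.mul hψ.deriv) j).differentiable (by simp)) _) x j ?_
    simp only [mkP_update]
    exact hasDerivAt_const _ _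
  · rw [mk_div_single]
    refine mk_fderiv_coord ((dP j).const_mul _) x j ?_
    simp only [mkP_update]
    exact hasDerivAt_const _ _
  · rw [mk_div_single]
    refine mk_fderiv_coord ((dQ j).const_mul _) x (i0 j) ?_
    have hmem : i0 j ∈ Finset.univ.erase j := Finset.mem_erase.2 ⟨hi0 j, Finset.mem_univ _⟩
    have e1 : ∀ s, mkP μ (a j) j (h2 j) (Function.update x (i0 j) s) = mkPer μ (a j) ψ s *
        ∏ i ∈ (Finset.univ.erase j).erase (i0 j), mkPer μ (a j) (deriv ψ) (x i) := fun s => by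
      rw [mkP, ← Finset.mul_prod_erase _ _ hmem]
      congr 1
      · simp [h2]
      · refine Finset.prod_congr rfl fun i hi => ?_
        have := Finset.ne_of_mem_erase hi
        simp [h2, this, h1]
    have e2 : mkP μ (a j) j h1 x = mkPer μ (a j) (deriv ψ) (x (i0 j)) *
        ∏ i ∈ (Finset.univ.erase j).erase (i0 j), mkPer μ (a j) (deriv ψ) (x i) := by
      rw [mkP, ← Finset.mul_prod_erase _ _ hmem]
    simp only [e1, e2]
    have := ((mkPer_hasDerivAt hμ (ha j) (hb j) hψ (x (i0 j))).mul_const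
      (∏ i ∈ (Finset.univ.erase j).erase (i0 j), mkPer μ (a j) (deriv ψ) (x i))).const_mul cΩ
    refine this.congr_deriv ?_
    rw [← hcΩ]; ring
  · simp only [hmul]
    rw [integral_smul_const, integral_const_mul,
      mk_integral hμ (ha j) (hb j) (hψ.deriv.mul hψ.deriv), hcW, ← hKdef]
    have : A * μ ^ (d - 1) * (μ⁻¹ * K) ^ (d - 1) = 1 := by
      rw [hA, mul_pow, inv_pow]; field_simp
    rw [this, one_smul]
  · obtain ⟨i, hi⟩ : ∃ i : Fin d, i ∉ ({j, k} : Finset (Fin d)) := by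
      by_contra! hc
      have h3 := Finset.card_le_card (fun i _ => hc i : (Finset.univ : Finset (Fin d)) ⊆ {j, k})
      rw [Finset.card_univ, Fintype.card_fin] at h3
      have := Finset.card_le_two (a := j) (b := k)
      omega
    simp only [Finset.mem_insert, Finset.mem_singleton, not_or] at hi
    by_cases c1 : 1/2 < |μ * (Int.fract (x i) - a j)|
    · simp only [mkP_zero H1 hi.1 c1, mul_zero, zero_smul]
    by_cases c2 : 1/2 < |μ * (Int.fract (x i) - a k)|
    · simp only [mkP_zero H1 hi.2 c2, mul_zero, zero_smul, smul_zero]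
    exfalso
    push Not at c1 c2
    rw [abs_le] at c1 c2
    have e3 : μ * (Int.fract (x i) - a j) - μ * (Int.fract (x i) - a k) =
      (μ / d) * ((k:ℝ) - j) := by simp only [a]; ring
    rcases lt_or_gt_of_ne hjk with hlt | hlt
    · have : (j:ℝ) + 1 ≤ k := by exact_mod_cast hlt
      nlinarith [c1.1, c1.2, c2.1, c2.2]
    · have : (k:ℝ) + 1 ≤ j := by exact_mod_cast hlt
      nlinarith [c1.1, c1.2, c2.1, c2.2]
end
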